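/- arXiv:1902.03734 — 8 statements merged into one kernel-verified Lean document; each statement's English description precedes it below -/
import Mathlib

section
/- Let f(x) ∈ ℤ[x] be monic of degree m such that at least one complex root of f is not an integer (equivalently, f is not a product of m monic linear polynomials with integer coefficients), and let q_1, q_2, ..., q_m ∈ ℤ. Then the equation (y + q_1)(y + q_2)···(y + q_m) = f(x) has only finitely many solutions (x, y) in integers. -/
open Polynomial

lemma aux_monic (n : ℕ) (p : ℤ[X]) (hp : p.Monic) (hd : p.natDegree = n + 1) :
    ∃ B : ℤ, ∀ x M : ℤ, 1 ≤ M → |x| ≤ M → |p.eval x - x ^ (n + 1)| ≤ B * M ^ n := by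
  refine ⟨∑ i ∈ Finset.range (n + 1), |p.coeff i|, fun x M hM hx => ?_⟩
  have h1 : p.eval x - x ^ (n + 1) = ∑ i ∈ Finset.range (n + 1), p.coeff i * x ^ i := by
    rw [eval_eq_sum_range, hd, Finset.sum_range_succ]
    have : p.coeff (n + 1) = 1 := by rw [← hd]; exact hp
    rw [this]; ring
  rw [h1, Finset.sum_mul]
  refine (Finset.abs_sum_le_sum_abs _ _).trans (Finset.sum_le_sum fun i hi => ?_)
  rw [abs_mul, abs_pow]
  have hi' : i ≤ n := by simpa [Nat.lt_succ_iff] using hi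
  exact mul_le_mul_of_nonneg_left
    ((pow_le_pow_left₀ (abs_nonneg x) hx i).trans (pow_le_pow_right₀ hM hi')) (abs_nonneg _)

lemma aux_pow (n : ℕ) (a b B : ℤ) (hb : 0 ≤ b) (hab : b ≤ a) (ha : 1 ≤ a)
    (h : a ^ (n + 1) - b ^ (n + 1) ≤ B * a ^ n) : a - b ≤ B := by
  have h1 : b ^ n ≤ a ^ n := pow_le_pow_left₀ hb hab n
  have h2 : 0 < a ^ n := by positivity
  have h3 : (a - b) * a ^ n ≤ B * a ^ n := by
    refine le_trans ?_ h
    rw [pow_succ, pow_succ]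
    nlinarith [mul_nonneg hb (sub_nonneg.2 h1)]
  exact le_of_mul_le_mul_right h3 h2

lemma aux_bound (n : ℕ) (f g : ℤ[X]) (hf : f.Monic) (hfd : f.natDegree = n + 1)
    (hg : g.Monic) (hgd : g.natDegree = n + 1) :
    ∃ B : ℤ, ∀ x y : ℤ, g.eval y = f.eval x → |(|y| - |x|)| ≤ B := by
  obtain ⟨B1, h1⟩ := aux_monic n f hf hfd
  obtain ⟨B2, h2⟩ := aux_monic n g hg hgd
  have hB1 : 0 ≤ B1 := by simpa using (abs_nonneg _).trans (h1 1 1 le_rfl (by simp))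
  have hB2 : 0 ≤ B2 := by simpa using (abs_nonneg _).trans (h2 1 1 le_rfl (by simp))
  refine ⟨B1 + B2, fun x y hxy => ?_⟩
  have key : ∀ M : ℤ, 1 ≤ M → |x| ≤ M → |y| ≤ M →
      |(|y| ^ (n + 1) - |x| ^ (n + 1))| ≤ (B1 + B2) * M ^ n := by
    intro M hM hx hy
    have a1 := h1 x M hM hx
    have a2 := h2 y M hM hy
    rw [← abs_pow, ← abs_pow]
    refine (abs_abs_sub_abs_le _ _).trans ?_
    have : y ^ (n + 1) - x ^ (n + 1)
      = (f.eval x - x ^ (n + 1)) - (g.eval y - y ^ (n + 1)) := by rw [hxy]; ring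
    rw [this, add_mul]
    exact (abs_sub _ _).trans (add_le_add a1 a2)
  rcases le_total |x| |y| with h | h
  · rw [abs_of_nonneg (sub_nonneg.2 h)]
    by_cases hy : 1 ≤ |y|
    · exact aux_pow n _ _ _ (abs_nonneg _) h hy ((le_abs_self _).trans (key _ hy h le_rfl))
    · have := abs_nonneg x
      omega
  · rw [abs_sub_comm, abs_of_nonneg (sub_nonneg.2 h)]
    by_cases hx : 1 ≤ |x|
    · refine aux_pow n _ _ _ (abs_nonneg _) h hx ((le_abs_self _).trans ?_)
      rw [abs_sub_comm]
      exact key _ hx le_rfl h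
    · have := abs_nonneg y
      omega

theorem stmt1 (m : ℕ) (f : Polynomial ℤ) (hf : f.Monic) (hdeg : f.natDegree = m)
    (hroot : ∃ z : ℂ, Polynomial.aeval z f = 0 ∧ ∀ k : ℤ, z ≠ (k : ℂ))
    (q : Fin m → ℤ) :
    {p : ℤ × ℤ | (∏ i, (p.2 + q i)) = f.eval p.1}.Finite := by
  obtain ⟨z, hz, hzk⟩ := hroot
  obtain _ | n := m
  · rw [hf.natDegree_eq_zero.1 hdeg] at hz
    simp at hz
  set g : ℤ[X] := ∏ i, (X + C (q i)) with hgdef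
  have hg : g.Monic := monic_prod_of_monic _ _ fun i _ => monic_X_add_C _
  have hgd : g.natDegree = n + 1 := by
    rw [hgdef, natDegree_prod_of_monic _ _ fun i _ => monic_X_add_C _]
    simp only [natDegree_X_add_C]
    simp
  have hge : ∀ y, g.eval y = ∏ i, (y + q i) := by
    intro y; simp [hgdef, eval_prod]
  obtain ⟨B, hB⟩ := aux_bound n f g hf hdeg hg hgd
  have hfin : ∀ s ∈ ({1, -1} : Set ℤ), ∀ k : ℤ,
      {x : ℤ | g.eval (s * x + k) = f.eval x}.Finite := by
    intro s hs k
    by_contra hinf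
    have heq : g.comp (C s * X + C k) = f := by
      refine eq_of_infinite_eval_eq _ _ ?_
      simpa [eval_comp] using hinf
    rw [← heq, aeval_comp] at hz
    simp only [hgdef, map_prod, Finset.prod_eq_zero_iff] at hz
    obtain ⟨i, -, hi⟩ := hz
    simp at hi
    rcases hs with rfl | rfl
    · apply hzk (-(k + q i))
      push_cast at hi ⊢
      linear_combination hi
    · apply hzk (k + q i)
      push_cast at hi ⊢
      linear_combination -hi
  have hs : ({1, -1} : Set ℤ).Finite := by simp
  refine (hs.biUnion fun s hs' => (Set.finite_Icc (-B) B).biUnion fun k _ =>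
    (hfin s hs' k).image (fun x => (x, s * x + k))).subset ?_
  rintro ⟨x, y⟩ hxy
  have hxy' : g.eval y = f.eval x := by rw [hge]; exact hxy
  have hb := hB x y hxy'
  have : ∃ s ∈ ({1, -1} : Set ℤ), |y - s * x| ≤ B := by
    rcases abs_cases x with ⟨h1, _⟩ | ⟨h1, _⟩ <;> rcases abs_cases y with ⟨h2, _⟩ | ⟨h2, _⟩ <;>
      rw [h1, h2] at hb
    · exact ⟨1, by simp, by simpa using hb⟩
    · exact ⟨-1, by simp, by rw [← abs_neg]; convert hb using 2; ring⟩
    · exact ⟨-1, by simp, by convert hb using 2; ring⟩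
    · exact ⟨1, by simp, by rw [← abs_neg]; convert hb using 2; ring⟩
  obtain ⟨s, hs1, hs2⟩ := this
  simp only [Set.mem_iUnion]
  refine ⟨s, hs1, y - s * x, abs_le.1 hs2, x, ?_, ?_⟩
  · simpa using hxy'
  · simp
end

section
/- Assume the ABC-Conjecture. Let f_{11}, ..., f_{1l}, f_{21}, ..., f_{2m}, g_1, ..., g_n ∈ ℤ[x] and let α_1, ..., α_l, β_1, ..., β_m, γ_1, ..., γ_n be positive integers. Set f(x) = f_{11}(x)^{α_1}···f_{1l}(x)^{α_l} + f_{21}(x)^{β_1}···f_{2m}(x)^{β_m} (or with a minus sign in place of the plus sign) and g(y) = g_1(y)^{γ_1}···g_n(y)^{γ_n}. Suppose (1) deg g < deg f; (2) deg g > 1 + deg(f_{11}·f_{12}···f_{1l}·f_{21}···f_{2m}·g_1···g_n); (3) the polynomials f_{11}·f_{12}···f_{1l} and f_{21}···f_{2m} have no non-constant common factor in ℤ[x]; (4) the leading coefficient of each of f_{11}···f_{1l}, f_{21}···f_{2m}, and g_1···g_n is positive. Then the equation f(x) = g(y) has only finitely many solutions (x, y) in integers. -/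
open Polynomial

/-- The ABC-Conjecture: for every `ε > 0` there is a constant `C` such that for all
coprime positive integers `a`, `b`, `c` with `a + b = c`, we have
`c ≤ C * rad (a * b * c) ^ (1 + ε)`, where `rad n` is the product of the distinct
prime divisors of `n`. -/
def ABCConjecture : Prop :=
  ∀ ε : ℝ, 0 < ε → ∃ C : ℝ, ∀ a b c : ℕ, 0 < a → 0 < b → 0 < c →
    Nat.Coprime a b → a + b = c →
    (c : ℝ) ≤ C * ((∏ p ∈ (a * b * c).primeFactors, p : ℕ) : ℝ) ^ (1 + ε)

theorem growth_aux (P Q : ℤ[X]) (h : P.degree ≤ Q.degree) :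
    ∃ K : ℝ, 0 < K ∧ ∀ x : ℤ, |((P.eval x : ℤ) : ℝ)| ≤ K * (1 + |((Q.eval x : ℤ) : ℝ)|) := by
  have o := isBigO_cobounded_of_degree_le h
  rw [IsOrderBornology.cobounded_eq, ← Int.cofinite_eq] at o
  obtain ⟨c, hc, hb⟩ := o.exists_pos
  have hb := hb.bound
  rw [Filter.eventually_cofinite] at hb
  have hs : 0 ≤ ∑ x ∈ hb.toFinset, |((P.eval x : ℤ) : ℝ)| :=
    Finset.sum_nonneg fun _ _ => abs_nonneg _
  refine ⟨c + ∑ x ∈ hb.toFinset, |((P.eval x : ℤ) : ℝ)|, by linarith, fun x => ?_⟩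
  have hq : 0 ≤ |((Q.eval x : ℤ) : ℝ)| := abs_nonneg _
  by_cases hx : x ∈ hb.toFinset
  · have h1 := Finset.single_le_sum (f := fun x : ℤ => |((P.eval x : ℤ) : ℝ)|)
      (fun _ _ => abs_nonneg _) hx
    nlinarith [mul_nonneg hs hq, mul_nonneg hc.le hq]
  · rw [Set.Finite.mem_toFinset] at hx
    simp only [Set.mem_ofPred_eq, not_not, Int.norm_eq_abs] at hx
    nlinarith [mul_nonneg hs hq, mul_nonneg hc.le hq]

theorem upper_aux (P : ℤ[X]) :
    ∃ K : ℝ, 0 < K ∧ ∀ x : ℤ, |((P.eval x : ℤ) : ℝ)| ≤ K * (1 + |(x : ℝ)|) ^ P.natDegree := by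
  obtain ⟨K, hK, h⟩ := growth_aux P (X ^ P.natDegree) (by
    rw [degree_X_pow]; exact degree_le_natDegree)
  refine ⟨2 * K, by linarith, fun x => (h x).trans ?_⟩
  have h0 : 0 ≤ |(x : ℝ)| := abs_nonneg _
  have h1 : (1 : ℝ) ≤ (1 + |(x : ℝ)|) ^ P.natDegree := one_le_pow₀ (by linarith)
  have h2 : |(x : ℝ)| ^ P.natDegree ≤ (1 + |(x : ℝ)|) ^ P.natDegree :=
    pow_le_pow_left₀ h0 (by linarith) _
  simp only [eval_pow, eval_X, Int.cast_pow, abs_pow]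
  nlinarith

theorem lower_aux (P : ℤ[X]) (hP : P ≠ 0) :
    ∃ K : ℝ, 0 < K ∧ ∀ x : ℤ, (1 + |(x : ℝ)|) ^ P.natDegree ≤ K * (1 + |((P.eval x : ℤ) : ℝ)|) := by
  obtain ⟨K, hK, h⟩ := growth_aux (X ^ P.natDegree) P (by
    rw [degree_X_pow, degree_eq_natDegree hP])
  refine ⟨2 ^ P.natDegree * (1 + K), by positivity, fun x => ?_⟩
  have h0 : 0 ≤ |(x : ℝ)| := abs_nonneg _
  have h1 := h x
  simp only [eval_pow, eval_X, Int.cast_pow, abs_pow] at h1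
  have h2 : (1 + |(x : ℝ)|) ^ P.natDegree ≤ 2 ^ P.natDegree * (1 + |(x : ℝ)| ^ P.natDegree) := by
    rcases le_total |(x : ℝ)| 1 with hx | hx
    · calc (1 + |(x : ℝ)|) ^ P.natDegree ≤ 2 ^ P.natDegree :=
            pow_le_pow_left₀ (by linarith) (by linarith) _
        _ ≤ _ := le_mul_of_one_le_right (by positivity) (by
            have : 0 ≤ |(x : ℝ)| ^ P.natDegree := by positivity
            linarith)
    · calc (1 + |(x : ℝ)|) ^ P.natDegree ≤ (2 * |(x : ℝ)|) ^ P.natDegree :=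
            pow_le_pow_left₀ (by linarith) (by linarith) _
        _ = 2 ^ P.natDegree * |(x : ℝ)| ^ P.natDegree := mul_pow _ _ _
        _ ≤ _ := by gcongr; linarith
  refine h2.trans ?_
  rw [mul_assoc]
  have h3 : 0 ≤ |((P.eval x : ℤ) : ℝ)| := abs_nonneg _
  gcongr
  nlinarith

theorem coprime_aux (A B : ℤ[X]) (hA : A ≠ 0)
    (h3 : ∀ d : ℤ[X], d ∣ A → d ∣ B → d.natDegree = 0) :
    IsCoprime (A.map (algebraMap ℤ ℚ)) (B.map (algebraMap ℤ ℚ)) := by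
  have hinj : Function.Injective (algebraMap ℤ ℚ) := IsFractionRing.injective ℤ ℚ
  apply isCoprime_of_irreducible_dvd
  · rintro ⟨h, -⟩
    exact hA ((Polynomial.map_eq_zero_iff hinj).1 h)
  · intro z hz hzA hzB
    obtain ⟨b, hb, hbz⟩ := IsLocalization.integerNormalization_spec (nonZeroDivisors ℤ) z
    set w := IsLocalization.integerNormalization (nonZeroDivisors ℤ) z with hw
    have hb0 : (b : ℚ) ≠ 0 := by exact_mod_cast nonZeroDivisors.ne_zero hb
    have hbz' : w.map (algebraMap ℤ ℚ) = C (b : ℚ) * z := by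
      rw [hbz, ← smul_eq_C_mul]; exact (Int.cast_smul_eq_zsmul ℚ b z).symm
    have hu : IsUnit (C (b : ℚ)) := isUnit_C.2 (isUnit_iff_ne_zero.2 hb0)
    have hdiv : ∀ D : ℤ[X], z ∣ D.map (algebraMap ℤ ℚ) → w.primPart ∣ D := by
      intro D hD
      apply w.isPrimitive_primPart.dvd_of_fraction_map_dvd_fraction_map (K := ℚ)
      refine dvd_trans (Polynomial.map_dvd _ w.primPart_dvd) ?_
      rw [hbz']
      exact hu.mul_left_dvd.2 hD
    have hd := h3 _ (hdiv A hzA) (hdiv B hzB)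
    rw [natDegree_primPart, ← natDegree_map_eq_of_injective hinj, hbz',
      natDegree_C_mul hb0] at hd
    exact (natDegree_pos_iff_degree_pos.2 (degree_pos_of_irreducible hz)).ne' hd

theorem bezout_aux (A B : ℤ[X])
    (h : IsCoprime (A.map (algebraMap ℤ ℚ)) (B.map (algebraMap ℤ ℚ))) :
    ∃ D : ℤ, D ≠ 0 ∧ ∀ x d : ℤ, d ∣ A.eval x → d ∣ B.eval x → d ∣ D := by
  have hinj : Function.Injective (algebraMap ℤ ℚ) := IsFractionRing.injective ℤ ℚ
  obtain ⟨u, v, huv⟩ := h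
  obtain ⟨b, hb, hbu⟩ := IsLocalization.integerNormalization_spec (nonZeroDivisors ℤ) u
  obtain ⟨c, hc, hcv⟩ := IsLocalization.integerNormalization_spec (nonZeroDivisors ℤ) v
  set U := IsLocalization.integerNormalization (nonZeroDivisors ℤ) u
  set V := IsLocalization.integerNormalization (nonZeroDivisors ℤ) v
  have key : C c * U * A + C b * V * B = C (b * c) := by
    apply map_injective _ hinj
    simp only [Polynomial.map_add, Polynomial.map_mul, hbu, hcv, map_C, zsmul_eq_mul]
    have e : ∀ k : ℤ, (C ((algebraMap ℤ ℚ) k) : ℚ[X]) = (k : ℚ[X]) := by intro k; simp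
    rw [e, e, e]
    push_cast
    linear_combination (b * c : ℚ[X]) * huv
  refine ⟨b * c, mul_ne_zero (nonZeroDivisors.ne_zero hb) (nonZeroDivisors.ne_zero hc), ?_⟩
  intro x d hA hB
  have := congrArg (eval x) key
  simp only [eval_add, eval_mul, eval_C] at this
  rw [← this]
  exact dvd_add (hA.mul_left _) (hB.mul_left _)

theorem abc_int_aux (abc : ABCConjecture) (ε : ℝ) (hε : 0 < ε) : ∃ K : ℝ, 0 < K ∧
    ∀ a b c : ℤ, a ≠ 0 → b ≠ 0 → c ≠ 0 → IsCoprime a b → a + b = c →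
    |(c : ℝ)| ≤ K * ((∏ p ∈ (a * b * c).natAbs.primeFactors, p : ℕ) : ℝ) ^ (1 + ε) := by
  obtain ⟨K, hK⟩ := abc ε hε
  refine ⟨max K 1, by positivity, ?_⟩
  intro a b c ha hb hc hab habc
  have hmain : ∀ x y z : ℕ, 0 < x → 0 < y → 0 < z → Nat.Coprime x y → x + y = z →
      x * y * z = (a * b * c).natAbs → c.natAbs ≤ z →
      |(c : ℝ)| ≤ max K 1 * ((∏ p ∈ (a * b * c).natAbs.primeFactors, p : ℕ) : ℝ) ^ (1 + ε) := by
    intro x y z hx hy hz hxy hxyz hprod hcz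
    have h := hK x y z hx hy hz hxy hxyz
    rw [hprod] at h
    have h1 : |(c : ℝ)| ≤ (z : ℝ) := by
      rw [← Int.cast_abs, Int.abs_eq_natAbs]; exact_mod_cast hcz
    refine h1.trans (h.trans ?_)
    gcongr
    exact le_max_left _ _
  have hab' : Nat.Coprime a.natAbs b.natAbs := Int.isCoprime_iff_nat_coprime.1 hab
  have hcb : IsCoprime c b := by
    rw [← habc]
    have := (IsCoprime.add_mul_right_left_iff (z := 1)).2 hab
    simpa using this
  have hca : IsCoprime c a := by
    rw [← habc]
    have := (IsCoprime.add_mul_right_left_iff (z := 1)).2 hab.symm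
    simpa [add_comm] using this
  have hcb' := Int.isCoprime_iff_nat_coprime.1 hcb
  have hca' := Int.isCoprime_iff_nat_coprime.1 hca
  have pa := Int.natAbs_pos.2 ha
  have pb := Int.natAbs_pos.2 hb
  have pc := Int.natAbs_pos.2 hc
  have : a.natAbs + b.natAbs = c.natAbs ∨ c.natAbs + b.natAbs = a.natAbs ∨
      c.natAbs + a.natAbs = b.natAbs := by omega
  rcases this with h | h | h
  · exact hmain _ _ _ pa pb pc hab' h (by simp [Int.natAbs_mul]) le_rfl
  · exact hmain _ _ _ pc pb pa hcb' h (by simp only [Int.natAbs_mul]; ring) (by omega)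
  · exact hmain _ _ _ pc pa pb hca' h (by simp only [Int.natAbs_mul]; ring) (by omega)

/-- A version with bounded gcd and a bound for the radical. -/
theorem abc_gcd_aux (abc : ABCConjecture) (ε : ℝ) (hε : 0 < ε) (D : ℤ) (hD : D ≠ 0) :
    ∃ K : ℝ, 0 < K ∧
    ∀ a b c R : ℤ, a ≠ 0 → b ≠ 0 → c ≠ 0 → R ≠ 0 → (∀ d : ℤ, d ∣ a → d ∣ b → d ∣ D) →
    a + b = c → (∀ p : ℤ, Prime p → p ∣ a * b * c → p ∣ R) →
    |(c : ℝ)| ≤ K * |(R : ℝ)| ^ (1 + ε) := by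
  obtain ⟨K, hK, h⟩ := abc_int_aux abc ε hε
  have hD' : 0 < |(D : ℝ)| := abs_pos.2 (by exact_mod_cast hD)
  refine ⟨|(D : ℝ)| * K, by positivity, ?_⟩
  intro a b c R ha hb hc hR hd habc hp
  have hg0 : 0 < Int.gcd a b := Int.gcd_pos_of_ne_zero_left _ ha
  obtain ⟨g, hg⟩ : ∃ g : ℤ, g = (Int.gcd a b : ℤ) := ⟨_, rfl⟩
  have hgz : g ≠ 0 := by rw [hg]; exact_mod_cast hg0.ne'
  have hga : g ∣ a := hg ▸ Int.gcd_dvd_left ..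
  have hgb : g ∣ b := hg ▸ Int.gcd_dvd_right ..
  have hgD : g ∣ D := hd g hga hgb
  have hcop : IsCoprime (a / g) (b / g) := by
    rw [Int.isCoprime_iff_gcd_eq_one, hg]
    exact Int.gcd_ediv_gcd_ediv_gcd hg0
  obtain ⟨a', rfl⟩ := hga
  obtain ⟨b', rfl⟩ := hgb
  rw [Int.mul_ediv_cancel_left _ hgz, Int.mul_ediv_cancel_left _ hgz] at hcop
  obtain ⟨c', rfl⟩ : ∃ c', c = g * c' := ⟨a' + b', by rw [← habc]; ring⟩
  have ha' := right_ne_zero_of_mul ha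
  have hb' := right_ne_zero_of_mul hb
  have hc' := right_ne_zero_of_mul hc
  have h1 := h a' b' c' ha' hb' hc' hcop (by
    apply mul_left_cancel₀ hgz; linarith)
  have hrad : ((∏ p ∈ (a' * b' * c').natAbs.primeFactors, p : ℕ) : ℝ) ≤ |(R : ℝ)| := by
    have : (∏ p ∈ (a' * b' * c').natAbs.primeFactors, p) ≤ R.natAbs := by
      apply Nat.le_of_dvd (Int.natAbs_pos.2 hR)
      rw [Nat.prod_primeFactors_dvd_iff (Int.natAbs_ne_zero.2 hR)]
      intro p hpm
      have hpp := Nat.prime_of_mem_primeFactors hpm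
      have hpd := Nat.dvd_of_mem_primeFactors hpm
      rw [Nat.mem_primeFactors]
      refine ⟨hpp, ?_, Int.natAbs_ne_zero.2 hR⟩
      rw [← Int.natCast_dvd] at hpd ⊢
      apply hp _ (Nat.prime_iff_prime_int.1 hpp)
      refine hpd.trans ⟨g ^ 3, by ring⟩
    rw [← Int.cast_abs, Int.abs_eq_natAbs]; exact_mod_cast this
  have hgle : |(g : ℝ)| ≤ |(D : ℝ)| := by
    have := Int.natAbs_le_of_dvd_ne_zero hgD hD
    rw [← Int.cast_abs, ← Int.cast_abs, Int.abs_eq_natAbs, Int.abs_eq_natAbs]; exact_mod_cast this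
  push_cast
  rw [abs_mul, mul_assoc]
  refine mul_le_mul hgle (h1.trans ?_) (abs_nonneg _) (abs_nonneg _)
  gcongr

theorem prime_dvd_aux {k : ℕ} (F : Fin k → ℤ[X]) (e : Fin k → ℕ) (x p : ℤ) (hp : Prime p)
    (h : p ∣ (∏ i, F i ^ e i).eval x) : p ∣ (∏ i, F i).eval x := by
  rw [eval_prod] at h ⊢
  obtain ⟨i, hi, hd⟩ := hp.exists_mem_finset_dvd h
  rw [eval_pow] at hd
  exact (hp.dvd_of_dvd_pow hd).trans (Finset.dvd_prod_of_mem _ hi)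

theorem finite_aux (P : ℤ[X]) (hP : 0 < P.natDegree) (c : ℤ) : {x : ℤ | P.eval x = c}.Finite := by
  have h0 : P - C c ≠ 0 := by
    intro h
    rw [sub_eq_zero] at h
    rw [h, natDegree_C] at hP
    exact lt_irrefl _ hP
  refine (finite_setOfPred_isRoot h0).subset ?_
  intro x hx
  simp only [Set.mem_ofPred_eq] at hx
  simp [IsRoot, hx]

theorem core_aux (abc : ABCConjecture) (F1 F2 f G R1 R2 Q : ℤ[X])
    (hf : f = F1 + F2)
    (hcop : IsCoprime (F1.map (algebraMap ℤ ℚ)) (F2.map (algebraMap ℤ ℚ)))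
    (hR1 : R1 ≠ 0) (hR2 : R2 ≠ 0) (hQ : Q ≠ 0)
    (p1 : ∀ x p : ℤ, Prime p → p ∣ F1.eval x → p ∣ R1.eval x)
    (p2 : ∀ x p : ℤ, Prime p → p ∣ F2.eval x → p ∣ R2.eval x)
    (pG : ∀ x p : ℤ, Prime p → p ∣ G.eval x → p ∣ Q.eval x)
    (h1 : G.natDegree < f.natDegree)
    (h2 : 1 + (R1 * R2 * Q).natDegree < G.natDegree) :
    {p : ℤ × ℤ | f.eval p.1 = G.eval p.2}.Finite := by
  have hG0 : 0 < G.natDegree := by omega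
  have hf0 : 0 < f.natDegree := by omega
  have hGz : G ≠ 0 := by rintro rfl; simp at hG0
  have hfz : f ≠ 0 := by rintro rfl; simp at hf0
  -- it suffices to bound y away from finitely many x
  have hred : ∀ (S T : Set ℤ), S.Finite → T.Finite →
      (∀ x y : ℤ, f.eval x = G.eval y → x ∈ S ∨ y ∈ T) →
      {p : ℤ × ℤ | f.eval p.1 = G.eval p.2}.Finite := by
    intro S T hS hT h
    have e1 : (⋃ x ∈ S, ({x} : Set ℤ) ×ˢ {y : ℤ | G.eval y = f.eval x}).Finite :=
      hS.biUnion fun x _ => (Set.finite_singleton x).prod (finite_aux G hG0 _)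
    have e2 : (⋃ y ∈ T, {x : ℤ | f.eval x = G.eval y} ×ˢ ({y} : Set ℤ)).Finite :=
      hT.biUnion fun y _ => (finite_aux f hf0 _).prod (Set.finite_singleton y)
    refine (e1.union e2).subset ?_
    rintro ⟨x, y⟩ hxy
    have hxy : f.eval x = G.eval y := hxy
    rcases h x y hxy with hx | hy
    · left
      simp only [Set.mem_iUnion]
      exact ⟨x, hx, rfl, hxy.symm⟩
    · right
      simp only [Set.mem_iUnion]
      exact ⟨y, hy, hxy, rfl⟩
  have hroot : ∀ P : ℤ[X], P ≠ 0 → {x : ℤ | P.eval x = 0}.Finite := fun P hP =>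
    finite_setOfPred_isRoot hP
  obtain ⟨D, hD, hDd⟩ := bezout_aux F1 F2 hcop
  set N := (R1 * R2 * Q).natDegree with hN
  have hNeq : N = R1.natDegree + R2.natDegree + Q.natDegree := by
    rw [hN, natDegree_mul (mul_ne_zero hR1 hR2) hQ, natDegree_mul hR1 hR2]
  have hN1 : (0 : ℝ) < N + 1 := by positivity
  obtain ⟨K, hK, habc⟩ := abc_gcd_aux abc (1 / (N + 1)) (by positivity) D hD
  obtain ⟨u1, hu1, U1⟩ := upper_aux R1
  obtain ⟨u2, hu2, U2⟩ := upper_aux R2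
  obtain ⟨u3, hu3, U3⟩ := upper_aux Q
  obtain ⟨lf, hlf, Lf⟩ := lower_aux f hfz
  obtain ⟨lg, hlg, Lg⟩ := lower_aux G hGz
  obtain ⟨ug, hug, Ug⟩ := upper_aux G
  -- comparison of x and y
  obtain ⟨M, hM1, hM⟩ : ∃ M : ℝ, 1 ≤ M ∧ ∀ x y : ℤ, f.eval x = G.eval y →
      1 + |(x : ℝ)| ≤ M * (1 + |(y : ℝ)|) := by
    refine ⟨max 1 (lf * (1 + ug)), le_max_left _ _, fun x y hxy => ?_⟩
    set M := max 1 (lf * (1 + ug))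
    have hM1 : 1 ≤ M := le_max_left _ _
    have hM2 : lf * (1 + ug) ≤ M := le_max_right _ _
    have hy : 1 ≤ 1 + |(y : ℝ)| := by linarith [abs_nonneg (y : ℝ)]
    have hYp : (1 : ℝ) ≤ (1 + |(y : ℝ)|) ^ G.natDegree := one_le_pow₀ hy
    apply le_of_pow_le_pow_left₀ hf0.ne' (by positivity)
    calc (1 + |(x : ℝ)|) ^ f.natDegree ≤ lf * (1 + |((f.eval x : ℤ) : ℝ)|) := Lf x
      _ = lf * (1 + |((G.eval y : ℤ) : ℝ)|) := by rw [hxy]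
      _ ≤ lf * ((1 + |(y : ℝ)|) ^ G.natDegree + ug * (1 + |(y : ℝ)|) ^ G.natDegree) := by
          gcongr
          exact Ug y
      _ = lf * (1 + ug) * (1 + |(y : ℝ)|) ^ G.natDegree := by ring
      _ ≤ M ^ f.natDegree * (1 + |(y : ℝ)|) ^ f.natDegree := by
          gcongr
          · exact hM2.trans (le_self_pow₀ hM1 hf0.ne')
      _ = _ := (mul_pow _ _ _).symm
  set A : ℝ := u1 * M ^ R1.natDegree * (u2 * M ^ R2.natDegree) * u3 with hA
  have hApos : 0 < A := by positivity
  set B : ℝ := lg * 2 * (K * A ^ (1 + 1 / ((N : ℝ) + 1))) with hB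
  -- bounded y
  have hbd : {y : ℤ | |(y : ℝ)| ≤ B}.Finite := by
    refine (Set.finite_Icc (-⌈B⌉) ⌈B⌉).subset ?_
    intro y hy
    have hy : |(y : ℝ)| ≤ B := hy
    rw [abs_le] at hy
    have hc := Int.le_ceil B
    constructor
    · have : ((-⌈B⌉ : ℤ) : ℝ) ≤ y := by push_cast; linarith
      exact_mod_cast this
    · have : (y : ℝ) ≤ (⌈B⌉ : ℤ) := by linarith
      exact_mod_cast this
  refine hred ({x | R1.eval x = 0} ∪ {x | R2.eval x = 0})
    ({y | Q.eval y = 0} ∪ {y : ℤ | |(y : ℝ)| ≤ B})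
    ((hroot _ hR1).union (hroot _ hR2)) ((hroot _ hQ).union hbd) ?_
  intro x y hxy
  by_cases x1 : R1.eval x = 0
  · exact Or.inl (Or.inl x1)
  by_cases x2 : R2.eval x = 0
  · exact Or.inl (Or.inr x2)
  by_cases y1 : Q.eval y = 0
  · exact Or.inr (Or.inl y1)
  refine Or.inr (Or.inr ?_)
  change |(y : ℝ)| ≤ B
  -- nonvanishing: zero is divisible by every prime
  have hnz : ∀ s t : ℤ, t ≠ 0 → (∀ p : ℤ, Prime p → p ∣ s → p ∣ t) → s ≠ 0 := by
    rintro s t ht h rfl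
    obtain ⟨p, hp1, hp2⟩ := Nat.exists_infinite_primes (t.natAbs + 1)
    have := h p (Nat.prime_iff_prime_int.1 hp2) (dvd_zero _)
    have := Int.natAbs_le_of_dvd_ne_zero this ht
    simp at this
    omega
  have n1 := hnz _ _ x1 (p1 x)
  have n2 := hnz _ _ x2 (p2 x)
  have n3 := hnz _ _ y1 (pG y)
  have key := habc (F1.eval x) (F2.eval x) (G.eval y) (R1.eval x * R2.eval x * Q.eval y) n1 n2 n3
    (mul_ne_zero (mul_ne_zero x1 x2) y1) (hDd x) (by rw [← hxy, hf, eval_add]) (by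
      intro p hp hd
      rcases hp.dvd_or_dvd hd with hd | hd
      · rcases hp.dvd_or_dvd hd with hd | hd
        · exact ((p1 x p hp hd).mul_right _).mul_right _
        · exact ((p2 x p hp hd).mul_left _).mul_right _
      · exact (pG y p hp hd).mul_left _)
  set Y : ℝ := 1 + |(y : ℝ)| with hY
  have hY1 : 1 ≤ Y := by linarith [abs_nonneg (y : ℝ)]
  have hX := hM x y hxy
  have hX0 : 0 ≤ 1 + |(x : ℝ)| := by positivity
  have hrad : |((R1.eval x * R2.eval x * Q.eval y : ℤ) : ℝ)| ≤ A * Y ^ N := by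
    push_cast
    rw [abs_mul, abs_mul]
    calc _ ≤ (u1 * (M * Y) ^ R1.natDegree) * (u2 * (M * Y) ^ R2.natDegree) *
          (u3 * Y ^ Q.natDegree) := by
          gcongr
          · exact (U1 x).trans (by gcongr)
          · exact (U2 x).trans (by gcongr)
          · exact U3 y
      _ = A * Y ^ N := by rw [hNeq, hA, mul_pow, mul_pow, pow_add, pow_add]; ring
  have hYN : (Y ^ N : ℝ) ^ (1 + 1 / ((N : ℝ) + 1)) ≤ Y ^ (N + 1) := by
    rw [← Real.rpow_natCast, ← Real.rpow_mul (by linarith), ← Real.rpow_natCast]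
    apply Real.rpow_le_rpow_of_exponent_le hY1
    push_cast
    have : (N : ℝ) * (1 / (N + 1)) ≤ 1 := by
      rw [mul_one_div, div_le_one hN1]; linarith
    linarith
  have hGv : (1 : ℝ) ≤ |((G.eval y : ℤ) : ℝ)| := by
    rw [← Int.cast_abs]; exact_mod_cast Int.one_le_abs n3
  have hfin : Y ^ (N + 1) * Y ≤ Y ^ (N + 1) * B := by
    calc Y ^ (N + 1) * Y = Y ^ (N + 2) := by ring
      _ ≤ Y ^ G.natDegree := pow_le_pow_right₀ hY1 (by omega)
      _ ≤ lg * (1 + |((G.eval y : ℤ) : ℝ)|) := Lg y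
      _ ≤ lg * (2 * |((G.eval y : ℤ) : ℝ)|) := by gcongr; linarith
      _ ≤ lg * (2 * (K * (A * Y ^ N) ^ (1 + 1 / ((N : ℝ) + 1)))) := by
          gcongr
          refine key.trans ?_
          gcongr
      _ = lg * (2 * (K * (A ^ (1 + 1 / ((N : ℝ) + 1)) * (Y ^ N) ^ (1 + 1 / ((N : ℝ) + 1))))) := by
          rw [Real.mul_rpow hApos.le (by positivity)]
      _ ≤ lg * (2 * (K * (A ^ (1 + 1 / ((N : ℝ) + 1)) * Y ^ (N + 1)))) := by gcongr
      _ = Y ^ (N + 1) * B := by rw [hB]; ring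
  have := le_of_mul_le_mul_left hfin (by positivity)
  linarith

theorem stmt3 (abc : ABCConjecture)
    (l m n : ℕ)
    (f1 : Fin l → Polynomial ℤ) (f2 : Fin m → Polynomial ℤ) (g : Fin n → Polynomial ℤ)
    (α : Fin l → ℕ) (β : Fin m → ℕ) (γ : Fin n → ℕ)
    (hα : ∀ i, 0 < α i) (hβ : ∀ j, 0 < β j) (hγ : ∀ k, 0 < γ k)
    (f G : Polynomial ℤ)
    (hf : f = (∏ i, f1 i ^ α i) + (∏ j, f2 j ^ β j) ∨
          f = (∏ i, f1 i ^ α i) - (∏ j, f2 j ^ β j))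
    (hG : G = ∏ k, g k ^ γ k)
    (h1 : G.natDegree < f.natDegree)
    (h2 : 1 + ((∏ i, f1 i) * (∏ j, f2 j) * (∏ k, g k)).natDegree < G.natDegree)
    (h3 : ∀ d : Polynomial ℤ, d ∣ (∏ i, f1 i) → d ∣ (∏ j, f2 j) → d.natDegree = 0)
    (h4a : 0 < (∏ i, f1 i).leadingCoeff)
    (h4b : 0 < (∏ j, f2 j).leadingCoeff)
    (h4c : 0 < (∏ k, g k).leadingCoeff) :
    {p : ℤ × ℤ | f.eval p.1 = G.eval p.2}.Finite := by
  have hR1 : (∏ i, f1 i) ≠ 0 := by intro h; simp [h] at h4a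
  have hR2 : (∏ j, f2 j) ≠ 0 := by intro h; simp [h] at h4b
  have hQ : (∏ k, g k) ≠ 0 := by intro h; simp [h] at h4c
  have hc := coprime_aux _ _ hR1 h3
  have hcop : IsCoprime ((∏ i, f1 i ^ α i).map (algebraMap ℤ ℚ))
      ((∏ j, f2 j ^ β j).map (algebraMap ℤ ℚ)) := by
    simp only [Polynomial.map_prod, Polynomial.map_pow] at hc ⊢
    refine IsCoprime.prod_left fun i hi => IsCoprime.prod_right fun j hj => IsCoprime.pow ?_
    exact IsCoprime.prod_right_iff.1 (IsCoprime.prod_left_iff.1 hc i hi) j hj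
  have pG : ∀ x p : ℤ, Prime p → p ∣ G.eval x → p ∣ (∏ k, g k).eval x := by
    rw [hG]; exact prime_dvd_aux g γ
  rcases hf with hf | hf
  · exact core_aux abc _ _ f G _ _ _ hf hcop hR1 hR2 hQ (prime_dvd_aux f1 α)
      (prime_dvd_aux f2 β) pG h1 h2
  · refine core_aux abc _ (-(∏ j, f2 j ^ β j)) f G _ _ _ (by rw [hf, sub_eq_add_neg]) ?_
      hR1 hR2 hQ (prime_dvd_aux f1 α) ?_ pG h1 h2
    · rw [Polynomial.map_neg]; exact hcop.neg_right
    · intro x p hp hd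
      rw [eval_neg, dvd_neg] at hd
      exact prime_dvd_aux f2 β x p hp hd
end

section
/- Assume the ABC-Conjecture. Let m > 2 and let q_1, ..., q_m ∈ ℤ be pairwise distinct. Let f(x) = ∏_{i=1}^k f_i(x)^{l_i}, where each f_i ∈ ℤ[x] and each l_i ≥ 2, and suppose f is nonconstant. Then the equation (y + q_1)(y + q_2)···(y + q_m) = f(x) has only finitely many solutions (x, y) in integers. -/
open Polynomial

lemma aux_abc_nat (abc : ABCConjecture) (ε : ℝ) (hε : 0 < ε) :
    ∃ C : ℝ, 1 ≤ C ∧ ∀ X Y Z : ℕ, 0 < X → 0 < Y → 0 < Z → Nat.Coprime X Y →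
      (X + Y = Z ∨ X + Z = Y ∨ Y + Z = X) →
      (X : ℝ) ≤ C * ((∏ p ∈ (X * Y * Z).primeFactors, p : ℕ) : ℝ) ^ (1 + ε) := by
  obtain ⟨C, hC⟩ := abc ε hε
  refine ⟨max C 1, le_max_right _ _, ?_⟩
  intro X Y Z hX hY hZ hXY h
  have key : ∀ a b c : ℕ, 0 < a → 0 < b → 0 < c → Nat.Coprime a b → a + b = c →
      a * b * c = X * Y * Z → X ≤ c →
      (X : ℝ) ≤ max C 1 * ((∏ p ∈ (X * Y * Z).primeFactors, p : ℕ) : ℝ) ^ (1 + ε) := by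
    intro a b c ha hb hc hab hs hp hXc
    have h1 := hC a b c ha hb hc hab hs
    rw [hp] at h1
    have h2 : (X : ℝ) ≤ c := by exact_mod_cast hXc
    refine h2.trans (h1.trans ?_)
    gcongr
    exact le_max_left _ _
  rcases h with h | h | h
  · exact key X Y Z hX hY hZ hXY h rfl (by omega)
  · refine key X Z Y hX hZ hY ?_ h (by ring) (by omega)
    subst h
    simpa using hXY
  · refine key Y Z X hY hZ hX ?_ h (by ring) le_rfl
    subst h
    have := hXY.symm
    simpa using this

lemma aux_dvd (a b : ℕ) (ha : 0 < a) (hb : 0 < b) (u : ℤ) :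
    (u + a) ^ 2 ∣ u ^ a * (u + a + b) ^ b - (-(a : ℤ)) ^ a * (b : ℤ) ^ b := by
  set t : ℤ := -(a : ℤ) with ht
  set P : ℤ[X] := X ^ a * (X + C ((a : ℤ) + b)) ^ b - C (t ^ a * (b : ℤ) ^ b) with hP
  have h0 : P.IsRoot t := by
    simp [hP, Polynomial.IsRoot, ht]
  obtain ⟨h, hh⟩ := dvd_iff_isRoot.mpr h0
  have h1 : P.derivative.eval t = h.eval t := by
    rw [hh]; simp
  have h2 : P.derivative.eval t = 0 := by
    rw [hP]
    simp only [derivative_sub, derivative_mul, derivative_C, derivative_X_pow, derivative_pow,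
      derivative_add, derivative_X]
    simp only [eval_sub, eval_mul, eval_add, eval_pow, eval_X, eval_C, eval_zero, eval_one]
    have e : t + ((a : ℤ) + b) = b := by rw [ht]; ring
    rw [e]
    obtain ⟨a', rfl⟩ := Nat.exists_eq_succ_of_ne_zero ha.ne'
    obtain ⟨b', rfl⟩ := Nat.exists_eq_succ_of_ne_zero hb.ne'
    simp [ht]
    ring
  have h3 : h.IsRoot t := by rw [Polynomial.IsRoot, ← h1, h2]
  obtain ⟨g, hg⟩ := dvd_iff_isRoot.mpr h3
  refine ⟨g.eval u, ?_⟩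
  have := congrArg (eval u) hh
  rw [hg] at this
  simp [hP] at this
  rw [ht] at *
  linear_combination this

lemma aux_rad (n : ℕ) (N : ℤ) (h : ∀ p : ℤ, Prime p → p ∣ n → p ^ 2 ∣ N) (hN : N ≠ 0) :
    ((∏ p ∈ n.primeFactors, p : ℕ) : ℤ) ^ 2 ≤ |N| := by
  have : (∏ p ∈ n.primeFactors, p ^ 2) ∣ N.natAbs := by
    apply Finset.prod_dvd_of_isRelPrime
    · intro p hp q hq hpq
      have hp' := Nat.prime_of_mem_primeFactors hp
      have hq' := Nat.prime_of_mem_primeFactors hq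
      have := (Nat.coprime_primes hp' hq').mpr hpq
      exact Nat.coprime_iff_isRelPrime.mp (Nat.Coprime.pow 2 2 this)
    · intro p hp
      have hp' := Nat.prime_of_mem_primeFactors hp
      have := h p (Nat.prime_iff_prime_int.mp hp')
        (by exact_mod_cast Nat.dvd_of_mem_primeFactors hp)
      rw [← Int.natCast_dvd]
      exact_mod_cast this
  rw [Finset.prod_pow] at this
  have := Nat.le_of_dvd (Int.natAbs_pos.mpr hN) this
  rw [← Int.natCast_natAbs]
  exact_mod_cast this

/-- purely analytic final step -/
lemma aux_final (d : ℕ) (hd : 0 < d) (L C K U x R : ℝ) (hL : 0 < L) (hC : 0 < C) (hK : 0 < K)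
    (hU : 1 ≤ U) (hR : 0 ≤ R) (h1 : U ^ d ≤ L * x)
    (h2 : x ≤ C * R ^ (1 + 1 / (2 * d : ℝ))) (h3 : R ^ 2 ≤ K * U ^ (2 * d - 1)) :
    U ≤ (L * (C * K ^ ((1 + 1 / (2 * d : ℝ)) / 2))) ^ (4 * d : ℝ) := by
  have hd' : (0 : ℝ) < d := by exact_mod_cast hd
  have hU0 : 0 < U := by linarith
  set e : ℝ := (1 + 1 / (2 * d : ℝ)) / 2 with he
  have he0 : 0 ≤ e := by positivity
  have hRe : R ^ (1 + 1 / (2 * d : ℝ)) = (R ^ 2) ^ e := by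
    rw [← Real.rpow_natCast R 2, ← Real.rpow_mul hR]
    congr 1
    rw [he]; push_cast; ring
  have h4 : (R ^ 2) ^ e ≤ (K * U ^ (2 * d - 1)) ^ e :=
    Real.rpow_le_rpow (by positivity) h3 he0
  have h5 : (K * U ^ (2 * d - 1)) ^ e = K ^ e * U ^ ((d : ℝ) - 1 / (4 * d)) := by
    rw [Real.mul_rpow hK.le (by positivity), ← Real.rpow_natCast U, ← Real.rpow_mul hU0.le]
    congr 2
    rw [Nat.cast_sub (by omega), he]
    push_cast
    field_simp
    ring
  have h6 : U ^ d = U ^ ((d : ℝ) - 1 / (4 * d)) * U ^ (1 / (4 * d) : ℝ) := by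
    rw [← Real.rpow_add hU0, ← Real.rpow_natCast]
    congr 1
    ring
  have hpos : 0 < U ^ ((d : ℝ) - 1 / (4 * d)) := by positivity
  have h7 : U ^ ((d : ℝ) - 1 / (4 * d)) * U ^ (1 / (4 * d) : ℝ)
      ≤ U ^ ((d : ℝ) - 1 / (4 * d)) * (L * (C * K ^ e)) := by
    rw [← h6]
    calc U ^ d ≤ L * x := h1
      _ ≤ L * (C * (K ^ e * U ^ ((d : ℝ) - 1 / (4 * d)))) := by
        rw [← h5]; rw [hRe] at h2
        gcongr
        exact h2.trans (by gcongr)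
      _ = _ := by ring
  have h8 := le_of_mul_le_mul_left h7 hpos
  calc U = (U ^ (1 / (4 * d) : ℝ)) ^ (4 * d : ℝ) := by
        rw [← Real.rpow_mul hU0.le]
        rw [one_div_mul_cancel (by positivity), Real.rpow_one]
    _ ≤ _ := Real.rpow_le_rpow (by positivity) h8 (by positivity)

lemma aux_core (abc : ABCConjecture) (a b : ℕ) (ha : 0 < a) (hb : 0 < b) (E : ℤ) (hE : E ≠ 0) :
    ∃ B : ℝ, ∀ u : ℤ, (∀ p : ℤ, Prime p → ¬ p ∣ E →
      (p ∣ u → p ^ 2 ∣ u) ∧ (p ∣ u + a → p ^ 2 ∣ u + a) ∧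
      (p ∣ u + a + b → p ^ 2 ∣ u + a + b)) → |(u : ℝ)| ≤ B := by
  set d := a + b with hd
  have hdpos : 0 < d := by omega
  have hd' : (0 : ℝ) < d := by exact_mod_cast hdpos
  obtain ⟨C, hC1, hC⟩ := aux_abc_nat abc (1 / (2 * d : ℝ)) (by positivity)
  set c0 : ℤ := (-(a : ℤ)) ^ a * (b : ℤ) ^ b with hc0
  have hc0ne : c0 ≠ 0 := by
    have : (a : ℤ) ≠ 0 := by exact_mod_cast ha.ne'
    have : (b : ℤ) ≠ 0 := by exact_mod_cast hb.ne'
    rw [hc0]; exact mul_ne_zero (pow_ne_zero _ (by omega)) (pow_ne_zero _ (by omega))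
  set c : ℝ := |(c0 : ℝ)| with hc
  have hcpos : 0 < c := by rw [hc]; positivity
  have hc1 : 1 ≤ c := by
    rw [hc]; exact_mod_cast Int.one_le_abs hc0ne
  set L : ℝ := 2 ^ d * c with hL
  set K : ℝ := (E * c0) ^ 2 * 256 * 4 ^ d with hK
  have hEr : (E : ℝ) ≠ 0 := by exact_mod_cast hE
  have hcr : (c0 : ℝ) ≠ 0 := by exact_mod_cast hc0ne
  have hKpos : 0 < K := by rw [hK]; positivity
  have hLpos : 0 < L := by rw [hL]; positivity
  refine ⟨max (2 * d + 2 * L) ((L * (C * K ^ ((1 + 1 / (2 * d : ℝ)) / 2))) ^ (4 * d : ℝ)), ?_⟩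
  intro u hu
  by_cases hbig : |(u : ℝ)| ≤ 2 * d + 2 * L
  · exact hbig.trans (le_max_left _ _)
  push Not at hbig
  refine le_trans ?_ (le_max_right _ _)
  set U : ℝ := |(u : ℝ)| with hU
  have h2d : (1 : ℝ) ≤ 2 ^ d := one_le_pow₀ (by norm_num)
  have hLc : c ≤ L := by rw [hL]; nlinarith
  have hU1 : 1 ≤ U := by linarith
  have hU0 : 0 < U := by linarith
  set v : ℤ := u + a with hv
  set w : ℤ := u + a + b with hw
  have hadR : (a : ℝ) + b = d := by rw [hd]; push_cast; ring
  have har : (0 : ℝ) < a := by exact_mod_cast ha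
  have hbr : (0 : ℝ) < b := by exact_mod_cast hb
  have hvl : U / 2 ≤ |(v : ℝ)| := by
    have : |(u : ℝ)| - |(-a : ℝ)| ≤ |(u : ℝ) - (-a)| := abs_sub_abs_le_abs_sub _ _
    rw [abs_neg, abs_of_pos har] at this
    rw [hv]; push_cast
    rw [sub_neg_eq_add] at this
    linarith
  have hvu : |(v : ℝ)| ≤ 2 * U := by
    have : |(u : ℝ) + a| ≤ |(u : ℝ)| + |(a : ℝ)| := abs_add_le _ _
    rw [abs_of_pos har] at this
    rw [hv]; push_cast
    linarith
  have hwl : U / 2 ≤ |(w : ℝ)| := by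
    have : |(u : ℝ)| - |(-d : ℝ)| ≤ |(u : ℝ) - (-d)| := abs_sub_abs_le_abs_sub _ _
    rw [abs_neg, abs_of_pos hd'] at this
    rw [hw]; push_cast
    rw [sub_neg_eq_add, ← hadR, ← add_assoc] at this
    linarith
  have hwu : |(w : ℝ)| ≤ 2 * U := by
    have : |(u : ℝ) + d| ≤ |(u : ℝ)| + |(d : ℝ)| := abs_add_le _ _
    rw [abs_of_pos hd', ← hadR, ← add_assoc] at this
    rw [hw]; push_cast
    linarith
  set A : ℤ := u ^ a * w ^ b with hA
  have hAabs : |(A : ℝ)| = U ^ a * |(w : ℝ)| ^ b := by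
    rw [hA]; push_cast; rw [abs_mul, abs_pow, abs_pow]
  have hAl : U ^ d ≤ 2 ^ d * |(A : ℝ)| := by
    rw [hAabs]
    calc U ^ d = U ^ a * U ^ b := by rw [hd, pow_add]
      _ ≤ U ^ a * (2 * |(w : ℝ)|) ^ b := by gcongr; linarith
      _ = 2 ^ b * (U ^ a * |(w : ℝ)| ^ b) := by rw [mul_pow]; ring
      _ ≤ 2 ^ d * (U ^ a * |(w : ℝ)| ^ b) := by
        gcongr
        · norm_num
        · omega
  have hAu : |(A : ℝ)| ≤ 2 ^ d * U ^ d := by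
    rw [hAabs]
    calc U ^ a * |(w : ℝ)| ^ b ≤ U ^ a * (2 * U) ^ b := by gcongr
      _ = 2 ^ b * U ^ d := by rw [mul_pow, hd, pow_add]; ring
      _ ≤ 2 ^ d * U ^ d := by
        gcongr
        · norm_num
        · omega
  have hUUd : U ≤ U ^ d := le_self_pow₀ hU1 hdpos.ne'
  have hAc : c < |(A : ℝ)| := by
    have : 2 ^ d * c < 2 ^ d * |(A : ℝ)| := by
      rw [← hL]; linarith
    exact lt_of_mul_lt_mul_left this (by positivity)
  obtain ⟨g, hg⟩ := aux_dvd a b ha hb u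
  rw [← hc0, ← hw, ← hA, ← hv] at hg
  have hAne : A ≠ 0 := by
    rintro h; rw [h] at hAc; simp at hAc; linarith
  have hSne : A - c0 ≠ 0 := by
    intro h
    have : A = c0 := by linarith
    rw [this] at hAc; exact lt_irrefl _ hAc
  have hgne : g ≠ 0 := by rintro rfl; simp at hg; exact hSne hg
  have hune : u ≠ 0 := by
    rintro h; rw [hU, h] at hU0; simp at hU0
  have hvne : v ≠ 0 := by
    rintro h; rw [h] at hvl; simp at hvl; linarith
  have hwne : w ≠ 0 := by
    rintro h; rw [h] at hwl; simp at hwl; linarith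
  -- divide by the gcd
  obtain ⟨G, x, y, hGpos, hxy, hAx, hcy⟩ :
      ∃ G x y : ℤ, 0 < G ∧ IsCoprime x y ∧ A = G * x ∧ c0 = G * y := by
    have hg0 : 0 < Int.gcd A c0 := Int.gcd_pos_of_ne_zero_left _ hAne
    refine ⟨Int.gcd A c0, A / Int.gcd A c0, c0 / Int.gcd A c0, by exact_mod_cast hg0, ?_, ?_, ?_⟩
    · rw [Int.isCoprime_iff_gcd_eq_one]
      exact Int.gcd_div_gcd_div_gcd hg0
    · rw [Int.mul_ediv_cancel' (Int.gcd_dvd_left ..)]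
    · rw [Int.mul_ediv_cancel' (Int.gcd_dvd_right ..)]
  have hxne : x ≠ 0 := by rintro rfl; simp at hAx; exact hAne hAx
  have hyne : y ≠ 0 := by rintro rfl; simp at hcy; exact hc0ne hcy
  have hSxy : A - c0 = G * (x - y) := by rw [hAx, hcy]; ring
  have hxyne : x - y ≠ 0 := by intro h; rw [h] at hSxy; simp at hSxy; exact hSne hSxy
  have habc := hC x.natAbs y.natAbs (x - y).natAbs (Int.natAbs_pos.mpr hxne)
    (Int.natAbs_pos.mpr hyne) (Int.natAbs_pos.mpr hxyne)
    (Int.isCoprime_iff_gcd_eq_one.mp hxy) (by omega)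
  set n := x.natAbs * y.natAbs * (x - y).natAbs with hn
  set R : ℕ := ∏ p ∈ n.primeFactors, p with hR
  have hrad := aux_rad n ((E * c0 * g) ^ 2 * (u * v * w)) (by
    intro p hp hpn
    have hpn' : p ∣ x * y * (x - y) := by
      rw [hn] at hpn; push_cast at hpn
      rw [← abs_mul, ← abs_mul] at hpn
      exact (dvd_abs _ _).mp hpn
    have hcases : p ∣ A ∨ p ∣ c0 ∨ p ∣ v ^ 2 * g := by
      rcases hp.dvd_or_dvd hpn' with h | h
      · rcases hp.dvd_or_dvd h with h | h
        · left; rw [hAx]; exact h.mul_left _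
        · right; left; rw [hcy]; exact h.mul_left _
      · right; right; rw [← hg, hSxy]; exact h.mul_left _
    have hcases' : p ∣ E * c0 * g ∨ p ^ 2 ∣ u * v * w := by
      by_cases hpE : p ∣ E
      · left; exact (hpE.mul_right _).mul_right _
      obtain ⟨h1, h2, h3⟩ := hu p hp hpE
      rcases hcases with h | h | h
      · right
        rcases hp.dvd_or_dvd h with h | h
        · exact ((h1 (hp.dvd_of_dvd_pow h)).mul_right _).mul_right _
        · exact (h3 (hp.dvd_of_dvd_pow h)).mul_left _
      · left; exact (h.mul_left _).mul_right _
      · rcases hp.dvd_or_dvd h with h | h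
        · right; exact ((h2 (hp.dvd_of_dvd_pow h)).mul_left _).mul_right _
        · left; exact h.mul_left _
    rcases hcases' with h | h
    · exact (pow_dvd_pow_of_dvd h 2).mul_right _
    · exact h.mul_left _) (by positivity)
  rw [← hR] at hrad
  have hrad' : (R : ℝ) ^ 2 ≤ (E * c0) ^ 2 * (g : ℝ) ^ 2 * (U * |(v : ℝ)| * |(w : ℝ)|) := by
    have : ((R : ℤ) : ℝ) ^ 2 ≤ ((|(E * c0 * g) ^ 2 * (u * v * w)| : ℤ) : ℝ) := by
      exact_mod_cast hrad
    push_cast at this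
    rw [abs_mul, abs_mul, abs_mul, abs_pow, sq_abs, mul_pow] at this
    exact this
  have hgb : |(g : ℝ)| * U ^ 2 ≤ 8 * 2 ^ d * U ^ d := by
    have e1 : |(v : ℝ)| ^ 2 * |(g : ℝ)| = |(A : ℝ) - c0| := by
      rw [← abs_pow, ← abs_mul]; congr 1; exact_mod_cast hg.symm
    have e2 : |(A : ℝ) - c0| ≤ |(A : ℝ)| + |(c0 : ℝ)| := abs_sub _ _
    have e3 : (U / 2) ^ 2 * |(g : ℝ)| ≤ |(v : ℝ)| ^ 2 * |(g : ℝ)| := by gcongr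
    rw [← hc] at e2
    nlinarith
  have hR2 : (R : ℝ) ^ 2 ≤ K * U ^ (2 * d - 1) := by
    have f1 : (|(g : ℝ)| * U ^ 2) ^ 2 ≤ (8 * 2 ^ d * U ^ d) ^ 2 := by gcongr
    have f2 : (8 * 2 ^ d * U ^ d) ^ 2 = 64 * 4 ^ d * U ^ (2 * d - 1) * U := by
      rw [mul_assoc _ (U ^ _), ← pow_succ, show 2 * d - 1 + 1 = d * 2 by omega, mul_pow, mul_pow,
        ← pow_mul, ← pow_mul, mul_comm d 2, pow_mul 2 2 d]
      norm_num
    have f3 : U * |(v : ℝ)| * |(w : ℝ)| ≤ U * (2 * U) * (2 * U) := by gcongr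
    have f4 : (R : ℝ) ^ 2 * U ≤ (K * U ^ (2 * d - 1)) * U := by
      calc (R : ℝ) ^ 2 * U ≤ ((E * c0) ^ 2 * (g : ℝ) ^ 2 * (U * (2 * U) * (2 * U))) * U := by
            gcongr; exact hrad'.trans (by gcongr)
        _ = 4 * (E * c0) ^ 2 * (|(g : ℝ)| * U ^ 2) ^ 2 := by
            rw [mul_pow |(g : ℝ)|, sq_abs]; ring
        _ ≤ 4 * (E * c0) ^ 2 * (64 * 4 ^ d * U ^ (2 * d - 1) * U) := by
            rw [← f2]; gcongr
        _ = _ := by rw [hK]; ring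
    exact le_of_mul_le_mul_right f4 hU0
  refine aux_final d hdpos L C K U (x.natAbs : ℝ) R hLpos (by linarith) hKpos hU1 (by positivity)
    ?_ habc hR2
  -- U ^ d ≤ L * |x|
  have hGc : (G : ℝ) ≤ c := by
    rw [hc]
    have : G ≤ |c0| := Int.le_of_dvd (abs_pos.mpr hc0ne) ((dvd_abs _ _).mpr ⟨y, hcy⟩)
    exact_mod_cast this
  have hxr : (x.natAbs : ℝ) = |(x : ℝ)| := by rw [Nat.cast_natAbs]; push_cast; rfl
  have hGr : (0 : ℝ) < G := by exact_mod_cast hGpos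
  have hAG : |(A : ℝ)| = G * |(x : ℝ)| := by
    rw [hAx]; push_cast; rw [abs_mul, abs_of_pos hGr]
  rw [hxr]
  calc U ^ d ≤ 2 ^ d * |(A : ℝ)| := hAl
    _ = 2 ^ d * (G * |(x : ℝ)|) := by rw [hAG]
    _ ≤ 2 ^ d * (c * |(x : ℝ)|) := by gcongr
    _ = _ := by rw [hL]; ring

lemma aux_three (m : ℕ) (hm : 2 < m) (q : Fin m → ℤ) (hq : Function.Injective q) :
    ∃ i j k, q i < q j ∧ q j < q k := by
  have h01 : q ⟨0, by omega⟩ ≠ q ⟨1, by omega⟩ := fun h => by simpa using hq h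
  have h02 : q ⟨0, by omega⟩ ≠ q ⟨2, by omega⟩ := fun h => by simpa using hq h
  have h12 : q ⟨1, by omega⟩ ≠ q ⟨2, by omega⟩ := fun h => by simpa using hq h
  rcases lt_or_gt_of_ne h01 with h | h <;> rcases lt_or_gt_of_ne h02 with h' | h' <;>
    rcases lt_or_gt_of_ne h12 with hh | hh
  all_goals first
    | exact ⟨_, _, _, h, hh⟩
    | exact ⟨_, _, _, hh, h⟩
    | exact ⟨_, _, _, h, h'⟩
    | exact ⟨_, _, _, h', h⟩
    | exact ⟨_, _, _, h', hh⟩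
    | exact ⟨_, _, _, hh, h'⟩
    | omega

theorem stmt7 (abc : ABCConjecture)
    (m : ℕ) (hm : 2 < m) (q : Fin m → ℤ) (hq : Function.Injective q)
    (k : ℕ) (fi : Fin k → Polynomial ℤ) (l : Fin k → ℕ) (hl : ∀ i, 2 ≤ l i)
    (f : Polynomial ℤ) (hf : f = ∏ i, fi i ^ l i) (hnc : 0 < f.natDegree) :
    {p : ℤ × ℤ | (∏ i, (p.2 + q i)) = f.eval p.1}.Finite := by
  obtain ⟨i₁, i₂, i₃, h12, h23⟩ := aux_three m hm q hq
  obtain ⟨a, ha⟩ := Int.eq_ofNat_of_zero_le (sub_nonneg.mpr h12.le)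
  obtain ⟨b, hb⟩ := Int.eq_ofNat_of_zero_le (sub_nonneg.mpr h23.le)
  set E : ℤ := ∏ i, ∏ j ∈ Finset.univ.erase i, (q i - q j) with hE
  have hE0 : E ≠ 0 := by
    rw [hE, Finset.prod_ne_zero_iff]
    intro i _
    rw [Finset.prod_ne_zero_iff]
    intro j hj h
    exact (Finset.ne_of_mem_erase hj) (hq (sub_eq_zero.mp h)).symm
  obtain ⟨B, hB⟩ := aux_core abc a b (by omega) (by omega) E hE0
  have hbound : ∀ x y : ℤ, (∏ i, (y + q i)) = f.eval x → |(y : ℝ)| ≤ |B| + ∑ i, |(q i : ℝ)| := by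
    intro x y hxy
    have hqi : ∀ i, |(q i : ℝ)| ≤ ∑ i, |(q i : ℝ)| := fun i =>
      Finset.single_le_sum (f := fun i => |(q i : ℝ)|) (fun _ _ => abs_nonneg _)
        (Finset.mem_univ i)
    have hpow : ∀ p : ℤ, Prime p → p ∣ f.eval x → p ^ 2 ∣ f.eval x := by
      intro p hp h
      rw [hf, eval_prod] at h ⊢
      obtain ⟨i, _, hi⟩ := (hp.dvd_finsetProd_iff _).mp h
      rw [eval_pow] at hi
      have hi' := hp.dvd_of_dvd_pow hi
      refine dvd_trans ?_ (Finset.dvd_prod_of_mem _ (Finset.mem_univ i))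
      rw [eval_pow]
      exact (pow_dvd_pow p (hl i)).trans (pow_dvd_pow_of_dvd hi' _)
    have hsq : ∀ p : ℤ, Prime p → ¬ p ∣ E → ∀ i, p ∣ y + q i → p ^ 2 ∣ y + q i := by
      intro p hp hpE i hpi
      have h1 : p ^ 2 ∣ ∏ i, (y + q i) := by
        rw [hxy]; apply hpow p hp; rw [← hxy]
        exact hpi.trans (Finset.dvd_prod_of_mem _ (Finset.mem_univ i))
      rw [← Finset.mul_prod_erase _ _ (Finset.mem_univ i)] at h1
      refine hp.pow_dvd_of_dvd_mul_right 2 ?_ h1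
      intro h
      obtain ⟨j, hj, hpj⟩ := (hp.dvd_finsetProd_iff _).mp h
      apply hpE
      have h2 : p ∣ q i - q j := by
        have := dvd_sub hpi hpj
        simpa using this
      rw [hE]
      exact h2.trans ((Finset.dvd_prod_of_mem (fun j => q i - q j) hj).trans
        (Finset.dvd_prod_of_mem (fun i => ∏ j ∈ Finset.univ.erase i, (q i - q j))
          (Finset.mem_univ i)))
    have h := hB (y + q i₁) (by
      intro p hp hpE
      have e2 : y + q i₁ + a = y + q i₂ := by
        have : q i₂ - q i₁ = (a : ℤ) := ha
        linarith
      have e3 : y + q i₂ + b = y + q i₃ := by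
        have : q i₃ - q i₂ = (b : ℤ) := hb
        linarith
      rw [e2, e3]
      exact ⟨hsq p hp hpE i₁, hsq p hp hpE i₂, hsq p hp hpE i₃⟩)
    have h3 : |((y + q i₁ : ℤ) : ℝ) - q i₁| ≤ |((y + q i₁ : ℤ) : ℝ)| + |(q i₁ : ℝ)| := abs_sub _ _
    have h4 := hqi i₁
    have h5 := le_abs_self B
    push_cast at h h3
    rw [add_sub_cancel_right] at h3
    linarith
  obtain ⟨M, hM⟩ := exists_nat_ge (|B| + ∑ i, |(q i : ℝ)|)
  have hfin : (⋃ y ∈ Set.Icc (-(M : ℤ)) M,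
      Set.image (fun x : ℤ => (x, y)) {x : ℤ | f.eval x = ∏ i, (y + q i)}).Finite := by
    refine Set.Finite.biUnion (Set.finite_Icc _ _) ?_
    intro y _
    apply Set.Finite.image
    have hne : f - C (∏ i, (y + q i)) ≠ 0 := by
      intro h
      rw [sub_eq_zero.mp h, natDegree_C] at hnc
      exact lt_irrefl _ hnc
    refine (Polynomial.finite_setOfPred_isRoot hne).subset ?_
    intro x hx
    simp only [Set.mem_ofPred_eq] at hx ⊢
    rw [Polynomial.IsRoot, eval_sub, eval_C, hx, sub_self]
  refine hfin.subset ?_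
  rintro ⟨x, y⟩ h
  simp only [Set.mem_ofPred_eq] at h
  have h1 : |(y : ℝ)| ≤ M := (hbound x y h).trans hM
  have h2 : |y| ≤ (M : ℤ) := by exact_mod_cast h1
  simp only [Set.mem_iUnion]
  exact ⟨y, abs_le.mp h2, x, h.symm, rfl⟩
end

section
/- Let f(x) = a_0 + a_1 x + ··· + a_m x^m and g(x) = b_0 + b_1 x + ··· + b_m x^m be polynomials in ℤ[x] with deg f = deg g = m ≥ 2, and suppose a_{m−1} − b_{m−1} is not divisible by m·b_m. Then the equation g(y) = f(x) has finitely many integer solutions if and only if |x − y| is bounded over all integer solutions (x, y). -/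
open Polynomial

theorem stmt11 (m : ℕ) (hm : 2 ≤ m)
    (f g : Polynomial ℤ) (hf : f.natDegree = m) (hg : g.natDegree = m)
    (hdiv : ¬ ((m : ℤ) * g.coeff m ∣ f.coeff (m - 1) - g.coeff (m - 1))) :
    {p : ℤ × ℤ | g.eval p.2 = f.eval p.1}.Finite ↔
      ∃ B : ℤ, ∀ x y : ℤ, g.eval y = f.eval x → |x - y| ≤ B := by
  constructor
  · intro h
    obtain ⟨B, hB⟩ := (h.image (fun p : ℤ × ℤ => |p.1 - p.2|)).bddAbove
    exact ⟨B, fun x y hxy => hB ⟨(x, y), hxy, rfl⟩⟩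
  · rintro ⟨B, hB⟩
    have hne : ∀ d : ℤ, taylor d g - f ≠ 0 := by
      intro d h0
      have h1 : taylor d g = f := sub_eq_zero.mp h0
      apply hdiv
      obtain ⟨k, rfl⟩ : ∃ k, m = k + 1 := ⟨m - 1, by omega⟩
      have h2 : f.coeff k = g.coeff k + ((k + 1 : ℕ) : ℤ) * g.coeff (k + 1) * d := by
        rw [← h1, taylor_coeff, eval_eq_sum_range' (n := 2)]
        · simp [Finset.sum_range_succ, hasseDeriv_coeff, add_comm 1 k]
        · have := natDegree_hasseDeriv_le g k
          omega
      refine ⟨d, ?_⟩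
      simp only [Nat.add_sub_cancel]
      rw [h2]; ring
    have hfin : (⋃ d ∈ Set.Icc (-B) B,
        (fun x : ℤ => (x, x + d)) '' {x | (taylor d g - f).IsRoot x}).Finite := by
      refine (Set.finite_Icc (-B) B).biUnion fun d _ => ?_
      exact (finite_setOf_isRoot (hne d)).image _
    refine hfin.subset ?_
    rintro ⟨x, y⟩ hxy
    have hb := abs_le.mp (hB x y hxy)
    simp only [Set.mem_iUnion]
    refine ⟨y - x, ⟨by linarith [hb.2], by linarith [hb.1]⟩, x, ?_, by simp⟩
    have hxy' : g.eval y = f.eval x := hxy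
    simp [IsRoot, taylor_eval, hxy']
end

section
/- Let f(x) be a monic polynomial of degree n with positive integer coefficients. If there are infinitely many complete composites of f(x), then f(x) has a factor x + c in ℤ[x] with c a positive integer. -/
open Polynomial

/-- For a polynomial `f` of degree `m`, a positive integer `k` is a *complete composite*
of `f` if `k = f(n)` for some positive integer `n`, and `k = ∏ i, (n + a i)` for some
positive integers `a 1, ..., a m`. -/
def CompleteComposite (f : Polynomial ℤ) (k : ℤ) : Prop :=
  0 < k ∧ ∃ n : ℤ, 0 < n ∧ f.eval n = k ∧
    ∃ a : Fin f.natDegree → ℤ, (∀ i, 0 < a i) ∧ k = ∏ i, (n + a i)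

lemma eval_upper (f : Polynomial ℤ) (hf : f.Monic) (m : ℕ) (hm : f.natDegree = m + 1)
    (hpos : ∀ i ≤ f.natDegree, 0 < f.coeff i) (n : ℤ) (hn : 0 < n) :
    f.eval n ≤ n ^ (m + 1) + (∑ i ∈ Finset.range (m + 1), f.coeff i) * n ^ m := by
  rw [eval_eq_sum_range, hm, Finset.sum_range_succ]
  have h1 : f.coeff (m + 1) = 1 := by rw [← hm]; exact hf
  rw [h1, one_mul, add_comm, Finset.sum_mul]
  gcongr with i hi
  · have := Finset.mem_range.mp hi
    exact (hpos i (by omega)).le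
  · have := Finset.mem_range.mp hi
    omega

lemma a_bound (f : Polynomial ℤ) (hf : f.Monic)
    (hpos : ∀ i ≤ f.natDegree, 0 < f.coeff i) (n : ℤ) (hn : 0 < n)
    (a : Fin f.natDegree → ℤ) (ha : ∀ i, 0 < a i) (h : f.eval n = ∏ i, (n + a i))
    (i : Fin f.natDegree) : a i ≤ ∑ i ∈ Finset.range f.natDegree, f.coeff i := by
  obtain ⟨m, hm⟩ : ∃ m, f.natDegree = m + 1 := ⟨f.natDegree - 1, by have := i.2; omega⟩
  have h1 := eval_upper f hf m hm hpos n hn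
  rw [← hm] at h1
  have h2 : (n + a i) * n ^ m ≤ ∏ i, (n + a i) := by
    rw [← Finset.mul_prod_erase Finset.univ _ (Finset.mem_univ i)]
    have hc : (Finset.univ.erase i).card = m := by
      rw [Finset.card_erase_of_mem (Finset.mem_univ i)]; simp [hm]
    have h3 : n ^ m ≤ ∏ j ∈ Finset.univ.erase i, (n + a j) := by
      rw [← hc, ← Finset.prod_const]
      exact Finset.prod_le_prod (fun _ _ => hn.le) (fun j _ => by linarith [ha j])
    exact mul_le_mul_of_nonneg_left h3 (by linarith [ha i])
  have h4 : n ^ f.natDegree = n * n ^ m := by rw [hm, pow_succ, mul_comm]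
  have hp : 0 < n ^ m := pow_pos hn m
  rw [h, h4] at h1
  have : a i * n ^ m ≤ (∑ i ∈ Finset.range f.natDegree, f.coeff i) * n ^ m := by
    linarith
  exact le_of_mul_le_mul_right this hp

theorem stmt12 (n : ℕ) (f : Polynomial ℤ) (hf : f.Monic) (hdeg : f.natDegree = n)
    (hpos : ∀ i ≤ f.natDegree, 0 < f.coeff i)
    (hinf : {k : ℤ | CompleteComposite f k}.Infinite) :
    ∃ c : ℤ, 0 < c ∧ (X + C c) ∣ f := by
  by_cases hd : f.natDegree = 0
  · exfalso
    apply hinf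
    have hf1 : f = 1 := hf.natDegree_eq_zero.mp hd
    refine (Set.finite_singleton (1 : ℤ)).subset ?_
    rintro k ⟨_, n, _, h, _⟩
    rw [hf1, eval_one] at h
    exact h.symm
  by_contra! hno
  apply hinf
  set S := ∑ i ∈ Finset.range f.natDegree, f.coeff i with hS
  let T : Set (Fin f.natDegree → ℤ) := Set.univ.pi (fun _ => Set.Icc 1 S)
  have hT : T.Finite := Set.Finite.pi (fun _ => Set.finite_Icc 1 S)
  have hne : ∀ a ∈ T, f - ∏ i, (X + C (a i)) ≠ 0 := by
    intro a ha h0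
    let i : Fin f.natDegree := ⟨0, by omega⟩
    have hai := ha i (Set.mem_univ i)
    refine hno (a i) (by have := hai.1; omega) ?_
    rw [sub_eq_zero.mp h0]
    exact Finset.dvd_prod_of_mem (fun i => X + C (a i)) (Finset.mem_univ i)
  have hfin : (⋃ a ∈ T, (fun x => f.eval x) ''
      {x | x ∈ (f - ∏ i, (X + C (a i))).roots}).Finite := by
    refine hT.biUnion fun a _ => Set.Finite.image _ ?_
    exact Multiset.finite_toSet _
  refine hfin.subset ?_
  rintro k ⟨_, n, hn, hk, a, ha, hka⟩
  have haT : a ∈ T := fun i _ =>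
    ⟨ha i, a_bound f hf hpos n hn a ha (hk.trans hka) i⟩
  refine Set.mem_biUnion haT ⟨n, ?_, hk⟩
  rw [Set.mem_setOf_eq, mem_roots (hne a haT), IsRoot.def, eval_sub, eval_prod, hk, hka]
  simp
end

section
/- Let f(x) be a monic polynomial of degree m with positive integer coefficients such that not all complex roots of f are integers (equivalently, f is not a product of m monic linear polynomials with integer coefficients), and let q_1, q_2, ..., q_m be positive integers. Then the equation (y + q_1)(y + q_2)···(y + q_m) = f(x) has only finitely many solutions (x, y) with x and y positive integers. -/
open Polynomial

lemma pow_lower_aux (x A : ℤ) (hx : 0 < x) (hA : 1 ≤ A) (n : ℕ) :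
    x ^ n + A * ∑ i ∈ Finset.range n, x ^ i ≤ (x + A) ^ n := by
  induction n with
  | zero => simp
  | succ n ih =>
    have hs : 0 ≤ ∑ i ∈ Finset.range n, x ^ i := Finset.sum_nonneg fun i _ => by positivity
    have h1 : (x + A) * (x ^ n + A * ∑ i ∈ Finset.range n, x ^ i) ≤ (x + A) * (x + A) ^ n :=
      mul_le_mul_of_nonneg_left ih (by linarith)
    have h2 : 0 ≤ (x + A - 1) * (A * ∑ i ∈ Finset.range n, x ^ i) :=
      mul_nonneg (by linarith) (mul_nonneg (by linarith) hs)
    rw [Finset.sum_range_succ, pow_succ' (x + A), pow_succ' x]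
    nlinarith

theorem stmt15 (m : ℕ) (f : Polynomial ℤ) (hf : f.Monic) (hdeg : f.natDegree = m)
    (hpos : ∀ i ≤ f.natDegree, 0 < f.coeff i)
    (hroots : ¬ ∃ c : Fin m → ℤ, f = ∏ i, (X + C (c i)))
    (q : Fin m → ℤ) (hq : ∀ i, 0 < q i) :
    {p : ℤ × ℤ | 0 < p.1 ∧ 0 < p.2 ∧ (∏ i, (p.2 + q i)) = f.eval p.1}.Finite := by
  have hm : m ≠ 0 := by
    rintro rfl
    apply hroots
    exact ⟨fun _ => 0, by simpa using hf.natDegree_eq_zero.mp hdeg⟩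
  set A : ℤ := 1 + ∑ i ∈ Finset.range m, f.coeff i with hAdef
  set Q : ℤ := ∑ i, q i with hQdef
  have hc : ∀ i ∈ Finset.range m, 0 ≤ f.coeff i := fun i hi =>
    (hpos i (by rw [hdeg]; exact (Finset.mem_range.mp hi).le)).le
  have hA : 1 ≤ A := by
    have := Finset.sum_nonneg hc
    linarith
  have hQ : 0 ≤ Q := Finset.sum_nonneg fun i _ => (hq i).le
  have hev : ∀ x, f.eval x = ∑ i ∈ Finset.range m, f.coeff i * x ^ i + x ^ m := by
    intro x
    have h1 : f.coeff m = 1 := by rw [← hdeg]; exact hf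
    rw [Polynomial.eval_eq_sum_range, hdeg, Finset.sum_range_succ, h1, one_mul]
  let P : ℤ → Polynomial ℤ := fun d => f - ∏ i, (X + C (d + q i))
  have hP : ∀ d, P d ≠ 0 := fun d h => hroots ⟨fun i => d + q i, sub_eq_zero.mp h⟩
  refine ((Set.finite_Icc (-Q) A).biUnion (t := fun d => (fun x : ℤ => (x, x + d)) '' {x | (P d).IsRoot x})
    fun d _ => (Polynomial.finite_setOf_isRoot (hP d)).image _).subset ?_
  rintro ⟨x, y⟩ ⟨hx, hy, h⟩
  dsimp only at hx hy h
  have hfl : x ^ m ≤ f.eval x := by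
    rw [hev]
    have := Finset.sum_nonneg fun i hi => mul_nonneg (hc i hi) (pow_nonneg hx.le i)
    linarith
  have hfu : f.eval x ≤ (x + A) ^ m := by
    refine le_trans ?_ (pow_lower_aux x A hx hA m)
    rw [hev, Finset.mul_sum, add_comm]
    gcongr with i hi
    have := Finset.single_le_sum hc hi
    linarith
  have hgl : y ^ m ≤ ∏ i, (y + q i) := by
    calc y ^ m = ∏ _i : Fin m, y := by simp
      _ ≤ _ := Finset.prod_le_prod (fun _ _ => hy.le) fun i _ => by linarith [hq i]
  have hgu : ∏ i, (y + q i) ≤ (y + Q) ^ m := by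
    calc ∏ i, (y + q i) ≤ ∏ _i : Fin m, (y + Q) :=
          Finset.prod_le_prod (fun i _ => by linarith [hq i]) fun i _ => by
            have := Finset.single_le_sum (fun i _ => (hq i).le) (Finset.mem_univ i)
            linarith
      _ = _ := by simp
  have h1 : y ≤ x + A := le_of_pow_le_pow_left₀ hm (by linarith) (by linarith)
  have h2 : x ≤ y + Q := le_of_pow_le_pow_left₀ hm (by linarith) (by linarith)
  simp only [Set.mem_iUnion]
  refine ⟨y - x, ⟨by linarith, by linarith⟩, x, ?_, by simp⟩
  simp only [P, Set.mem_setOf_eq, IsRoot.def, eval_sub, eval_prod, eval_add, eval_X, eval_C]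
  rw [← h, sub_eq_zero]
  exact Finset.prod_congr rfl fun i _ => by ring
end

section
/- Let f(x) be a monic polynomial of degree m with integer coefficients such that not all complex roots of f are integers (equivalently, f is not a product of m monic linear polynomials with integer coefficients), and let q_1, q_2, ..., q_m be integers. Then the equation (y + q_1)(y + q_2)···(y + q_m) = f(x) has only finitely many solutions (x, y) with x and y positive integers. -/
open Polynomial

theorem stmt16 (m : ℕ) (f : Polynomial ℤ) (hf : f.Monic) (hdeg : f.natDegree = m)
    (hroots : ¬ ∃ c : Fin m → ℤ, f = ∏ i, (X + C (c i)))
    (q : Fin m → ℤ) :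
    {p : ℤ × ℤ | 0 < p.1 ∧ 0 < p.2 ∧ (∏ i, (p.2 + q i)) = f.eval p.1}.Finite := by
  have hm : m ≠ 0 := by
    rintro rfl
    apply hroots
    refine ⟨fun _ => 0, ?_⟩
    simpa using hf.natDegree_eq_zero.mp hdeg
  obtain ⟨n, rfl⟩ := Nat.exists_eq_succ_of_ne_zero hm
  set S : ℤ := ∑ i ∈ Finset.range (n + 1), |f.coeff i| with hS
  set Q : ℤ := ∑ i, |q i| with hQ
  have hS0 : 0 ≤ S := Finset.sum_nonneg fun i _ => abs_nonneg _
  have hQ0 : 0 ≤ Q := Finset.sum_nonneg fun i _ => abs_nonneg _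
  have hqQ : ∀ i, |q i| ≤ Q := fun i =>
    Finset.single_le_sum (f := fun i => |q i|) (fun i _ => abs_nonneg _) (Finset.mem_univ i)
  have hfb : ∀ x : ℤ, 0 < x → |f.eval x - x ^ (n + 1)| ≤ S * x ^ n := by
    intro x hx
    have h1 : f.eval x = x ^ (n + 1) + ∑ i ∈ Finset.range (n + 1), f.coeff i * x ^ i := by
      conv_lhs => rw [hf.as_sum, hdeg]
      simp [eval_finset_sum]
    rw [h1, add_sub_cancel_left, hS, Finset.sum_mul]
    refine (Finset.abs_sum_le_sum_abs _ _).trans (Finset.sum_le_sum fun i hi => ?_)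
    rw [abs_mul, abs_of_nonneg (pow_nonneg hx.le i)]
    exact mul_le_mul_of_nonneg_left
      (pow_le_pow_right₀ hx (Nat.lt_succ_iff.mp (Finset.mem_range.mp hi))) (abs_nonneg _)
  have key : ∀ x y : ℤ, 0 < x → 0 < y → (∏ i, (y + q i)) = f.eval x →
      y - x ∈ Set.Icc (-(Q + S)) (Q + S) := by
    intro x y hx hy h
    have hb := abs_le.mp (hfb x hx)
    have hxn : 0 ≤ x ^ n := pow_nonneg hx.le n
    constructor
    · by_contra hc
      have hxS : 0 ≤ x - S := by linarith
      have h1 : (x - S) ^ (n + 1) ≤ f.eval x := by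
        have : (x - S) ^ n ≤ x ^ n := pow_le_pow_left₀ hxS (by linarith) n
        calc (x - S) ^ (n + 1) = (x - S) ^ n * (x - S) := pow_succ _ _
          _ ≤ x ^ n * (x - S) := mul_le_mul_of_nonneg_right this hxS
          _ = x ^ (n + 1) - S * x ^ n := by ring
          _ ≤ _ := by linarith [hb.1]
      have h2 : (∏ i, (y + q i)) ≤ (y + Q) ^ (n + 1) := by
        refine (le_abs_self _).trans ?_
        rw [Finset.abs_prod]
        calc ∏ i, |y + q i| ≤ ∏ _i : Fin (n + 1), (y + Q) := by
              refine Finset.prod_le_prod (fun i _ => abs_nonneg _) fun i _ => ?_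
              have := abs_add_le y (q i)
              rw [abs_of_pos hy] at this
              linarith [hqQ i]
          _ = _ := by simp
      have h3 : x - S ≤ y + Q :=
        le_of_pow_le_pow_left₀ (Nat.succ_ne_zero n) (by linarith) (h1.trans (h.ge.trans h2))
      linarith
    · by_contra hc
      have hyQ : 0 ≤ y - Q := by linarith
      have h1 : f.eval x ≤ (x + S) ^ (n + 1) := by
        have : x ^ n ≤ (x + S) ^ n := pow_le_pow_left₀ hx.le (by linarith) n
        calc f.eval x ≤ x ^ (n + 1) + S * x ^ n := by linarith [hb.2]
          _ = x ^ n * (x + S) := by ring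
          _ ≤ (x + S) ^ n * (x + S) := mul_le_mul_of_nonneg_right this (by linarith)
          _ = _ := (pow_succ _ _).symm
      have h2 : (y - Q) ^ (n + 1) ≤ ∏ i, (y + q i) := by
        calc (y - Q) ^ (n + 1) = ∏ _i : Fin (n + 1), (y - Q) := by simp
          _ ≤ _ := by
              refine Finset.prod_le_prod (fun i _ => hyQ) fun i _ => ?_
              linarith [hqQ i, neg_abs_le (q i)]
      have h3 : y - Q ≤ x + S :=
        le_of_pow_le_pow_left₀ (Nat.succ_ne_zero n) (by linarith) (h2.trans (h.le.trans h1))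
      linarith
  have hfin : ∀ d : ℤ, {x : ℤ | (∏ i, (x + d + q i)) = f.eval x}.Finite := by
    intro d
    have hne : f - ∏ i, (X + C (d + q i)) ≠ 0 := fun h =>
      hroots ⟨fun i => d + q i, sub_eq_zero.mp h⟩
    refine (Polynomial.finite_setOf_isRoot hne).subset ?_
    intro x hx
    simp only [Set.mem_setOf_eq] at hx
    simp [IsRoot, eval_prod, ← hx, add_assoc]
  refine (((Set.finite_Icc (-(Q + S)) (Q + S)).biUnion
    fun d _ => (hfin d).image fun x => (x, x + d))).subset ?_
  rintro ⟨x, y⟩ ⟨hx, hy, h⟩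
  simp only [Set.mem_iUnion]
  refine ⟨y - x, key x y hx hy h, x, ?_, by simp⟩
  simpa using h
end

section
/- Assume the ABC-Conjecture. Let g ∈ ℤ[x] have degree greater than 2 and no repeated complex roots (i.e., g is separable). Then g(m) is a powerful number for only finitely many integers m; that is, the set of integers m such that every prime p dividing g(m) satisfies p² | g(m) is finite. -/
open Polynomial

lemma belyi_one (n : ℕ) : ∀ p : ℚ[X], p ≠ 0 → p.natDegree ≤ n →
    ∃ f : ℚ[X], 0 < f.natDegree ∧ ∃ (L : Finset ℚ) (M : ℕ),
      p * derivative f ∣ (∏ l ∈ L, (f - C l)) ^ M := by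
  have base : ∀ p : ℚ[X], p ≠ 0 → p.natDegree = 0 →
    ∃ f : ℚ[X], 0 < f.natDegree ∧ ∃ (L : Finset ℚ) (M : ℕ),
      p * derivative f ∣ (∏ l ∈ L, (f - C l)) ^ M := by
    intro p hp h0
    refine ⟨X, by simp, ∅, 0, ?_⟩
    have : IsUnit p := by
      rw [Polynomial.isUnit_iff_degree_eq_zero, degree_eq_natDegree hp, h0]; rfl
    simpa using isUnit_iff_dvd_one.mp this
  induction n with
  | zero => intro p hp h0; exact base p hp (by omega)
  | succ n ih =>
    intro p hp hn
    by_cases h0 : p.natDegree = 0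
    · exact base p hp h0
    have hp' : derivative p ≠ 0 := by
      intro h
      exact h0 (derivative_eq_zero.mp h)
    have hdp : (derivative p).natDegree ≤ n := by
      have := natDegree_derivative_lt h0
      omega
    obtain ⟨q, hq0, hqn, hq⟩ : ∃ q : ℚ[X], q ≠ 0 ∧ q.natDegree ≤ n ∧
        derivative p ∣ q.comp p := by
      have hfin : Module.Finite ℚ (AdjoinRoot (derivative p)) :=
        (AdjoinRoot.powerBasis hp').finite
      refine ⟨minpoly ℚ (AdjoinRoot.mk (derivative p) p), ?_, ?_, ?_⟩
      · exact minpoly.ne_zero (Algebra.IsIntegral.isIntegral _)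
      · refine (minpoly.natDegree_le _).trans ?_
        rw [(AdjoinRoot.powerBasis hp').finrank]
        simpa using hdp
      · rw [← AdjoinRoot.mk_eq_zero]
        have := minpoly.aeval ℚ (AdjoinRoot.mk (derivative p) p)
        rw [← this, comp, aeval_def, hom_eval₂]
        rfl
    obtain ⟨f, hf, L, M, hL⟩ := ih q hq0 hqn
    refine ⟨f.comp p, ?_, insert (f.eval 0) L, M + 1, ?_⟩
    · rw [natDegree_comp]; positivity
    · have h1 : p ∣ f.comp p - C (f.eval 0) := by
        have : (X : ℚ[X]) ∣ f - C (f.eval 0) := by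
          rw [X_dvd_iff]; simp [coeff_zero_eq_eval_zero]
        obtain ⟨w, hw⟩ := this
        refine ⟨w.comp p, ?_⟩
        have := congrArg (fun z => z.comp p) hw
        simpa using this
      have h2 : derivative (f.comp p) ∣ (∏ l ∈ L, (f.comp p - C l)) ^ M := by
        obtain ⟨w, hw⟩ := hL
        obtain ⟨r, hr⟩ := hq
        refine ⟨r * w.comp p, ?_⟩
        have := congrArg (fun z => z.comp p) hw
        simp only [pow_comp, prod_comp, sub_comp, C_comp, mul_comp, hr] at this
        rw [this, derivative_comp]; ring
      have h3 : (∏ l ∈ L, (f.comp p - C l)) ∣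
          ∏ l ∈ insert (f.eval 0) L, (f.comp p - C l) :=
        Finset.prod_dvd_prod_of_subset _ _ _ (Finset.subset_insert _ _)
      have h4 : f.comp p - C (f.eval 0) ∣
          ∏ l ∈ insert (f.eval 0) L, (f.comp p - C l) :=
        Finset.dvd_prod_of_mem _ (Finset.mem_insert_self _ _)
      rw [pow_succ, mul_comm p]
      exact mul_dvd_mul (h2.trans (pow_dvd_pow_of_dvd h3 M)) (h1.trans h4)

lemma ram_mult (f : ℚ[X]) (L : Finset ℚ) (M : ℕ) (hf : 0 < f.natDegree)
    (h : derivative f ∣ (∏ l ∈ L, (f - C l)) ^ M) :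
    ∃ (R : ℚ[X]) (K : ℕ), (∏ l ∈ L, (f - C l)) = derivative f * R ∧
      (∏ l ∈ L, (f - C l)) ∣ R ^ K := by
  set P : ℚ[X] := ∏ l ∈ L, (f - C l) with hP
  have hne : ∀ l : ℚ, f - C l ≠ 0 := by
    intro l hl
    have : f = C l := sub_eq_zero.mp hl
    rw [this] at hf; simp at hf
  have hP0 : P ≠ 0 := Finset.prod_ne_zero_iff.mpr fun l _ => hne l
  have hf' : derivative f ≠ 0 := fun h => hf.ne' (derivative_eq_zero.mp h)
  set φ := algebraMap ℚ ℂ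
  have hφ : Function.Injective φ := φ.injective
  have hPm : P.map φ ≠ 0 := (Polynomial.map_ne_zero_iff hφ).mpr hP0
  have hfm : (derivative f).map φ ≠ 0 := (Polynomial.map_ne_zero_iff hφ).mpr hf'
  have key : ∀ α : ℂ, (P.map φ).IsRoot α →
      ((derivative f).map φ).rootMultiplicity α < (P.map φ).rootMultiplicity α := by
    intro α hα
    have : ∃ l ∈ L, ((f - C l).map φ).IsRoot α := by
      rw [hP, Polynomial.map_prod, IsRoot.def, eval_prod, Finset.prod_eq_zero_iff] at hα
      exact hα
    obtain ⟨l, hl, hr⟩ := this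
    have hm0 : (f - C l).map φ ≠ 0 := (Polynomial.map_ne_zero_iff hφ).mpr (hne l)
    have h1 := derivative_rootMultiplicity_of_root hr
    have h2 : derivative ((f - C l).map φ) = (derivative f).map φ := by
      rw [derivative_map]; simp
    rw [h2] at h1
    have h3 : 0 < ((f - C l).map φ).rootMultiplicity α := (rootMultiplicity_pos hm0).mpr hr
    have h4 : ((f - C l).map φ).rootMultiplicity α ≤ (P.map φ).rootMultiplicity α :=
      rootMultiplicity_le_rootMultiplicity_of_dvd hPm
        (Polynomial.map_dvd φ (Finset.dvd_prod_of_mem _ hl)) α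
    omega
  have hdvd : derivative f ∣ P := by
    rw [← Polynomial.map_dvd_map' φ, IsAlgClosed.dvd_iff_roots_le_roots hfm hPm,
      Multiset.le_iff_count]
    intro α
    rw [count_roots, count_roots]
    by_cases hα : (P.map φ).IsRoot α
    · exact (key α hα).le
    · have : ¬ ((derivative f).map φ).IsRoot α := by
        intro h'
        have := h'.dvd (Polynomial.map_dvd φ h)
        rw [Polynomial.map_pow, IsRoot.def, eval_pow] at this
        exact hα (eq_zero_of_pow_eq_zero this)
      rw [rootMultiplicity_eq_zero this]
      exact Nat.zero_le _
  obtain ⟨R, hR⟩ := hdvd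
  have hR0 : R ≠ 0 := by rintro rfl; simp at hR; exact hP0 hR
  have hRm : R.map φ ≠ 0 := (Polynomial.map_ne_zero_iff hφ).mpr hR0
  refine ⟨R, P.natDegree, hR, ?_⟩
  rw [← Polynomial.map_dvd_map' φ, IsAlgClosed.dvd_iff_roots_le_roots hPm
    (by rw [Polynomial.map_pow]; exact pow_ne_zero _ hRm), Multiset.le_iff_count]
  intro α
  rw [Polynomial.map_pow, roots_pow, Multiset.count_nsmul, count_roots, count_roots]
  by_cases hα : (P.map φ).IsRoot α
  · have h1 := key α hα
    have h2 : (P.map φ).rootMultiplicity α ≤ P.natDegree := by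
      rw [← count_roots, ← natDegree_map φ]
      exact (Multiset.count_le_card _ _).trans (card_roots' _)
    have h3 : (P.map φ).rootMultiplicity α = ((derivative f).map φ).rootMultiplicity α +
        (R.map φ).rootMultiplicity α := by
      rw [hR, Polynomial.map_mul, rootMultiplicity_mul (mul_ne_zero hfm hRm)]
    nlinarith
  · rw [rootMultiplicity_eq_zero hα]
    exact Nat.zero_le _

lemma log_deriv_prod (s : Finset ℚ) (e : ℚ → ℕ) :
    derivative (∏ i ∈ s, (X - C i : ℚ[X]) ^ e i) * ∏ i ∈ s, (X - C i : ℚ[X]) =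
      (∏ i ∈ s, (X - C i : ℚ[X]) ^ e i) *
        ∑ i ∈ s, C (e i : ℚ) * ∏ j ∈ s.erase i, (X - C j : ℚ[X]) := by
  rw [derivative_prod_finset, Finset.sum_mul, Finset.mul_sum]
  refine Finset.sum_congr rfl fun i hi => ?_
  rw [← Finset.mul_prod_erase s _ hi, ← Finset.mul_prod_erase s (fun i => (X - C i : ℚ[X]) ^ e i) hi]
  have : derivative ((X - C i : ℚ[X]) ^ e i) * (X - C i) = C (e i : ℚ) * (X - C i) ^ e i := by
    rcases Nat.eq_zero_or_pos (e i) with h | h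
    · simp [h]
    · obtain ⟨k, hk⟩ := Nat.exists_eq_succ_of_ne_zero h.ne'
      rw [hk, derivative_X_sub_C_pow]
      simp [pow_succ]; ring
  linear_combination ((∏ j ∈ s.erase i, (X - C j : ℚ[X]) ^ e j) *
    (∏ j ∈ s.erase i, (X - C j : ℚ[X]))) * this

lemma coeff_X_mul_deriv (p : ℚ[X]) (n : ℕ) :
    (X * derivative p).coeff n = n * p.coeff n := by
  cases n with
  | zero => simp
  | succ n => rw [coeff_X_mul, coeff_derivative]; push_cast; ring

lemma natDegree_X_mul_deriv_le (p : ℚ[X]) : (X * derivative p).natDegree ≤ p.natDegree := by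
  rw [natDegree_le_iff_coeff_eq_zero]
  intro n hn
  rw [coeff_X_mul_deriv, coeff_eq_zero_of_natDegree_lt hn, mul_zero]

lemma wronsk_degree (A B : ℚ[X]) (hA : A.Monic) (hB : B.Monic)
    (hAB : A.natDegree = B.natDegree)
    (hW : derivative A * B - A * derivative B ≠ 0) :
    A - B ≠ 0 ∧ (derivative A * B - A * derivative B).natDegree + 1 =
      (A - B).natDegree + B.natDegree := by
  have hC : A - B ≠ 0 := by
    intro h
    have : A = B := sub_eq_zero.mp h
    apply hW; rw [this]; ring
  refine ⟨hC, ?_⟩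
  set W := derivative A * B - A * derivative B with hWd
  set D := A - B with hD
  have hlt : D.natDegree < B.natDegree := by
    have := degree_sub_lt_left (p := A) (q := B) (by rw [degree_eq_natDegree hA.ne_zero, degree_eq_natDegree hB.ne_zero, hAB])
      hA.ne_zero (by rw [hA.leadingCoeff, hB.leadingCoeff])
    rw [← hD] at this
    have := natDegree_lt_natDegree hC this
    omega
  have hXW : X * W = (X * derivative D) * B - D * (X * derivative B) := by
    rw [hWd, hD, derivative_sub]; ring
  have h1 : (X * W).natDegree ≤ D.natDegree + B.natDegree := by
    rw [hXW]
    refine (natDegree_sub_le _ _).trans (max_le ?_ ?_)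
    · exact natDegree_mul_le.trans (Nat.add_le_add_right (natDegree_X_mul_deriv_le _) _)
    · exact natDegree_mul_le.trans (Nat.add_le_add_left (natDegree_X_mul_deriv_le _) _)
  have h2 : (X * W).coeff (D.natDegree + B.natDegree) ≠ 0 := by
    rw [hXW, coeff_sub, coeff_mul_add_eq_of_natDegree_le (natDegree_X_mul_deriv_le _) le_rfl,
      coeff_mul_add_eq_of_natDegree_le le_rfl (natDegree_X_mul_deriv_le _),
      coeff_X_mul_deriv, coeff_X_mul_deriv, hB.coeff_natDegree]
    have h3 : D.coeff D.natDegree ≠ 0 := by simpa using hC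
    have h4 : (D.natDegree : ℚ) - B.natDegree ≠ 0 := by
      rw [sub_ne_zero]; exact_mod_cast hlt.ne
    have := mul_ne_zero h4 h3
    intro h; apply this; linear_combination h
  have h3 := le_antisymm h1 (le_natDegree_of_ne_zero h2)
  rw [← h3, natDegree_X_mul hW]

lemma belyi_two (L : Finset ℚ) (hL : 2 ≤ L.card) :
    ∃ (A B : ℚ[X]) (K : ℕ), A.Monic ∧ B.Monic ∧ A.natDegree = B.natDegree ∧ IsCoprime A B ∧
      A ∣ (∏ i ∈ L, (X - C i)) ^ K ∧ B ∣ (∏ i ∈ L, (X - C i)) ^ K ∧ A - B ≠ 0 ∧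
      (A - B).natDegree + L.card = A.natDegree + 1 := by
  obtain ⟨⟨D, hD⟩, hDw⟩ := IsLocalization.exist_integer_multiples (nonZeroDivisors ℤ) L
    (fun i => Lagrange.nodalWeight L (id : ℚ → ℚ) i)
  have hD0 : (D : ℚ) ≠ 0 := by exact_mod_cast nonZeroDivisors.ne_zero hD
  have : ∀ i : ℚ, ∃ r : ℤ, i ∈ L → (r : ℚ) = D * Lagrange.nodalWeight L (id : ℚ → ℚ) i := by
    intro i
    by_cases hi : i ∈ L
    · obtain ⟨r, hr⟩ := hDw i hi
      refine ⟨r, fun _ => ?_⟩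
      simpa [Submonoid.smul_def] using hr
    · exact ⟨0, fun h => absurd h hi⟩
  choose r hr using this
  have hinj : Set.InjOn (id : ℚ → ℚ) L := Function.injective_id.injOn
  have hsum : ∑ i ∈ L, r i = 0 := by
    have h1 := Lagrange.coeff_eq_sum (s := L) (v := (id : ℚ → ℚ)) hinj (P := 1) (by
      rw [degree_one]; exact_mod_cast (by omega : 0 < L.card))
    rw [coeff_one, if_neg (by omega)] at h1
    have : ((∑ i ∈ L, r i : ℤ) : ℚ) = 0 := by
      push_cast
      rw [Finset.sum_congr rfl hr, ← Finset.mul_sum]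
      simp only [Lagrange.nodalWeight]
      simp only [eval_one, one_div] at h1
      simp only [Finset.prod_inv_distrib]
      rw [← h1, mul_zero]
    exact_mod_cast this
  have hpf : ∑ i ∈ L, C (r i : ℚ) * ∏ j ∈ L.erase i, (X - C j : ℚ[X]) = C (D : ℚ) := by
    have h1 := Lagrange.sum_basis (s := L) (v := (id : ℚ → ℚ)) hinj (Finset.card_pos.mp (by omega))
    have h2 : (∑ i ∈ L, C (r i : ℚ) * ∏ j ∈ L.erase i, (X - C j : ℚ[X])) =
        C (D : ℚ) * ∑ j ∈ L, Lagrange.basis L (id : ℚ → ℚ) j := by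
      rw [Finset.mul_sum]
      refine Finset.sum_congr rfl fun i hi => ?_
      rw [Lagrange.basis_eq_prod_sub_inv_mul_nodal_div hi, ← Lagrange.nodal_erase_eq_nodal_div hi,
        hr i hi, C_mul, mul_assoc, Lagrange.nodal_eq]
      rfl
    rw [h2, h1, mul_one]
  set A : ℚ[X] := ∏ i ∈ L, (X - C i) ^ (r i).toNat with hA
  set B : ℚ[X] := ∏ i ∈ L, (X - C i) ^ (-r i).toNat with hB
  set Q : ℚ[X] := ∏ i ∈ L, (X - C i) with hQ
  have hAm : A.Monic := monic_prod_of_monic _ _ fun i _ => (monic_X_sub_C i).pow _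
  have hBm : B.Monic := monic_prod_of_monic _ _ fun i _ => (monic_X_sub_C i).pow _
  have hQm : Q.Monic := monic_prod_of_monic _ _ fun i _ => (monic_X_sub_C i)
  have hdA : A.natDegree = ∑ i ∈ L, (r i).toNat := by
    rw [hA, natDegree_prod_of_monic _ _ fun i _ => (monic_X_sub_C i).pow _]
    simp
  have hdB : B.natDegree = ∑ i ∈ L, (-r i).toNat := by
    rw [hB, natDegree_prod_of_monic _ _ fun i _ => (monic_X_sub_C i).pow _]
    simp
  have hdQ : Q.natDegree = L.card := by
    rw [hQ, natDegree_prod_of_monic _ _ fun i _ => (monic_X_sub_C i)]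
    simp
  have hdAB : A.natDegree = B.natDegree := by
    rw [hdA, hdB]
    zify
    rw [← sub_eq_zero, ← Finset.sum_sub_distrib, ← hsum]
    refine Finset.sum_congr rfl fun i _ => ?_
    omega
  have hW : (derivative A * B - A * derivative B) * Q = C (D : ℚ) * (A * B) := by
    have h1 := log_deriv_prod L (fun i => (r i).toNat)
    have h2 := log_deriv_prod L (fun i => (-r i).toNat)
    rw [← hA, ← hQ] at h1
    rw [← hB, ← hQ] at h2
    have h3 : (∑ i ∈ L, C (((r i).toNat : ℕ) : ℚ) * ∏ j ∈ L.erase i, (X - C j : ℚ[X])) -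
        (∑ i ∈ L, C (((-r i).toNat : ℕ) : ℚ) * ∏ j ∈ L.erase i, (X - C j : ℚ[X])) = C (D : ℚ) := by
      rw [← hpf, ← Finset.sum_sub_distrib]
      refine Finset.sum_congr rfl fun i _ => ?_
      rw [← sub_mul, ← C_sub]
      congr 2
      have : ((r i).toNat : ℤ) - ((-r i).toNat : ℤ) = r i := by omega
      exact_mod_cast this
    linear_combination B * h1 - A * h2 + A * B * h3
  have hABne : C (D : ℚ) * (A * B) ≠ 0 :=
    mul_ne_zero (C_ne_zero.mpr hD0) (mul_ne_zero hAm.ne_zero hBm.ne_zero)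
  have hWne : derivative A * B - A * derivative B ≠ 0 := by
    intro h; rw [h, zero_mul] at hW; exact hABne hW.symm
  obtain ⟨hne, hdeg⟩ := wronsk_degree A B hAm hBm hdAB hWne
  have hdW := congrArg natDegree hW
  rw [natDegree_mul hWne hQm.ne_zero, natDegree_C_mul hD0,
    natDegree_mul hAm.ne_zero hBm.ne_zero, hdQ] at hdW
  have hle : ∀ e : ℚ → ℕ, (∏ i ∈ L, (X - C i : ℚ[X]) ^ e i) ∣ Q ^ (∑ i ∈ L, e i) := by
    intro e
    rw [hQ, ← Finset.prod_pow]
    refine Finset.prod_dvd_prod_of_dvd _ _ fun i hi => pow_dvd_pow _ ?_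
    exact Finset.single_le_sum (f := e) (fun _ _ => Nat.zero_le _) hi
  refine ⟨A, B, A.natDegree, hAm, hBm, hdAB, ?_, ?_, ?_, hne, by omega⟩
  · rw [hA, hB]
    refine IsCoprime.prod_left fun i _ => IsCoprime.prod_right fun j _ => ?_
    by_cases hij : i = j
    · subst hij
      rcases le_total (r i) 0 with h | h
      · rw [Int.toNat_of_nonpos h, pow_zero]; exact isCoprime_one_left
      · rw [Int.toNat_of_nonpos (by omega : -r i ≤ 0), pow_zero]; exact isCoprime_one_right
    · exact (isCoprime_X_sub_C_of_isUnit_sub (sub_ne_zero.mpr hij).isUnit).pow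
  · rw [hdA]; exact hle _
  · rw [hdAB, hdB]; exact hle _

lemma belyi_combine (g : ℚ[X]) (hg : Squarefree g) :
    ∃ (a b h : ℚ[X]) (K : ℕ), IsCoprime a b ∧ a ≠ 0 ∧ b ≠ 0 ∧ a - b ≠ 0 ∧ h ≠ 0 ∧
      a * b * (a - b) ∣ (g * h) ^ K ∧ h.natDegree + g.natDegree = a.natDegree + 1 := by
  have hg0 : g ≠ 0 := hg.ne_zero
  obtain ⟨f, hf, L₀, M, hdiv₀⟩ := belyi_one _ g hg0 le_rfl
  obtain ⟨L, hLcard, hdiv⟩ : ∃ L : Finset ℚ, 2 ≤ L.card ∧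
      g * derivative f ∣ (∏ l ∈ L, (f - C l)) ^ M := by
    refine ⟨{0, 1} ∪ L₀, ?_, ?_⟩
    · have h := Finset.card_le_card (Finset.subset_union_left (s₁ := ({0, 1} : Finset ℚ)) (s₂ := L₀))
      rwa [Finset.card_pair (by norm_num)] at h
    · exact hdiv₀.trans (pow_dvd_pow_of_dvd
        (Finset.prod_dvd_prod_of_subset _ _ _ Finset.subset_union_right) M)
  obtain ⟨R, K, hR, hRK⟩ := ram_mult f L M hf ((dvd_mul_left _ _).trans hdiv)
  obtain ⟨A, B, K₂, hA, hB, hAB, hcop, hAd, hBd, hC0, hCdeg⟩ := belyi_two L hLcard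
  set P : ℚ[X] := ∏ l ∈ L, (f - C l) with hP
  have hPc : (∏ i ∈ L, (X - C i : ℚ[X])).comp f = P := by
    rw [prod_comp]; simp [hP]
  have hP0 : P ≠ 0 := by
    refine Finset.prod_ne_zero_iff.mpr fun l _ hl => ?_
    have : f = C l := sub_eq_zero.mp hl
    rw [this] at hf; simp at hf
  have hdP : P.natDegree = L.card * f.natDegree := by
    rw [← hPc, natDegree_comp, natDegree_prod_of_monic _ _ fun i _ => (monic_X_sub_C i)]
    simp
  have hf' : derivative f ≠ 0 := fun h => by rw [hR, h, zero_mul] at hP0; exact hP0 rfl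
  have hR0 : R ≠ 0 := fun h => by rw [hR, h, mul_zero] at hP0; exact hP0 rfl
  have hdf : (derivative f).natDegree + 1 = f.natDegree := by
    rw [natDegree_derivative]; omega
  have hdR := congrArg natDegree hR
  rw [natDegree_mul hf' hR0, hdP] at hdR
  have hgR : g ∣ R := by
    rw [← hg.dvd_pow_iff_dvd (n := K * M + 1) (by omega)]
    refine ((dvd_mul_right _ _).trans hdiv).trans ?_
    refine (pow_dvd_pow_of_dvd hRK M).trans ?_
    rw [← pow_mul]; exact pow_dvd_pow _ (by omega)
  obtain ⟨h₁, hh₁⟩ := hgR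
  have hh₁0 : h₁ ≠ 0 := fun h => by rw [hh₁, h, mul_zero] at hR0; exact hR0 rfl
  have hcomp0 : ∀ q : ℚ[X], q ≠ 0 → q.comp f ≠ 0 := by
    intro q hq h
    rw [comp_eq_zero_iff] at h
    rcases h with h | h
    · exact hq h
    · rw [h.2] at hf; simp at hf
  have hc0 := hcomp0 _ hC0
  have hdh : (h₁ * (A - B).comp f).natDegree + g.natDegree = (A.comp f).natDegree + 1 := by
    rw [natDegree_mul hh₁0 hc0, natDegree_comp, natDegree_comp]
    rw [hh₁, natDegree_mul hg0 hh₁0] at hdR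
    have h3 := congrArg (· * f.natDegree) hCdeg
    simp only [add_mul] at h3
    omega
  refine ⟨A.comp f, B.comp f, h₁ * (A - B).comp f, K * (K₂ + K₂) + 1, ?_,
    hcomp0 _ hA.ne_zero, hcomp0 _ hB.ne_zero, ?_, mul_ne_zero hh₁0 hc0, ?_, hdh⟩
  · exact hcop.map (compRingHom f)
  · rw [← sub_comp]; exact hc0
  · rw [← sub_comp, ← mul_assoc, ← hh₁, mul_pow]
    refine mul_dvd_mul ?_ (dvd_pow_self _ (by omega))
    have e1 : A.comp f ∣ P ^ K₂ := by
      rw [← hPc, ← pow_comp]; exact map_dvd (compRingHom f) hAd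
    have e2 : B.comp f ∣ P ^ K₂ := by
      rw [← hPc, ← pow_comp]; exact map_dvd (compRingHom f) hBd
    refine (mul_dvd_mul e1 e2).trans ?_
    rw [← pow_add]
    refine (pow_dvd_pow_of_dvd hRK _).trans ?_
    rw [← pow_mul]
    exact pow_dvd_pow _ (by omega)

lemma clear_den (p : ℚ[X]) : ∃ (D : ℤ) (q : ℤ[X]), D ≠ 0 ∧
    q.map (Int.castRingHom ℚ) = C (D : ℚ) * p := by
  obtain ⟨D, hD, h⟩ := IsLocalization.integerNormalization_spec (nonZeroDivisors ℤ) p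
  refine ⟨D, _, nonZeroDivisors.ne_zero hD, h.trans ?_⟩
  rw [zsmul_eq_mul]
  simp

lemma belyi_int (g : ℤ[X]) (hg : Squarefree (g.map (Int.castRingHom ℚ))) :
    ∃ (a b h : ℤ[X]) (K : ℕ) (G E : ℤ) (u v : ℤ[X]), G ≠ 0 ∧ E ≠ 0 ∧ u * a + v * b = C G ∧
      a ≠ 0 ∧ b ≠ 0 ∧ a - b ≠ 0 ∧ h ≠ 0 ∧
      a * b * (a - b) ∣ C E * (g * h) ^ K ∧ h.natDegree + g.natDegree = a.natDegree + 1 := by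
  set φ := Int.castRingHom ℚ with hφd
  have hφ : Function.Injective φ := Int.cast_injective
  have hmapinj := Polynomial.map_injective φ hφ
  obtain ⟨a, b, h, K, ⟨u, v, huv⟩, ha, hb, hab, hh, hdvd, hdeg⟩ := belyi_combine _ hg
  obtain ⟨D₁, a₁, hD₁, ha₁⟩ := clear_den a
  obtain ⟨D₂, b₁, hD₂, hb₁⟩ := clear_den b
  obtain ⟨D₃, h₁, hD₃, hh₁⟩ := clear_den h
  obtain ⟨D₄, u₁, hD₄, hu₁⟩ := clear_den u
  obtain ⟨D₅, v₁, hD₅, hv₁⟩ := clear_den v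
  obtain ⟨w, hw⟩ := hdvd
  obtain ⟨D₆, w₁, hD₆, hw₁⟩ := clear_den w
  have q1 : (D₁ : ℚ) ≠ 0 := by exact_mod_cast hD₁
  have q2 : (D₂ : ℚ) ≠ 0 := by exact_mod_cast hD₂
  have q3 : (D₃ : ℚ) ≠ 0 := by exact_mod_cast hD₃
  have hA : (C D₂ * a₁).map φ = C ((D₁ * D₂ : ℤ) : ℚ) * a := by
    rw [Polynomial.map_mul, ha₁]; simp [hφd]; ring
  have hB : (C D₁ * b₁).map φ = C ((D₁ * D₂ : ℤ) : ℚ) * b := by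
    rw [Polynomial.map_mul, hb₁]; simp [hφd]; ring
  have q12 : ((D₁ * D₂ : ℤ) : ℚ) ≠ 0 := by exact_mod_cast mul_ne_zero hD₁ hD₂
  have ne_of : ∀ q : ℤ[X], q.map φ ≠ 0 → q ≠ 0 := by
    rintro q h rfl; simp at h
  refine ⟨C D₂ * a₁, C D₁ * b₁, h₁, K, D₁ * D₂ * D₄ * D₅, (D₁ * D₂) ^ 3 * D₆,
    C D₅ * u₁, C D₄ * v₁, by positivity, by positivity, ?_, ?_, ?_, ?_, ?_, ?_, ?_⟩
  · apply hmapinj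
    rw [Polynomial.map_add, Polynomial.map_mul φ (p := C D₅ * u₁), Polynomial.map_mul φ (p := C D₄ * v₁), hA, hB,
      Polynomial.map_mul, Polynomial.map_mul, hu₁, hv₁]
    simp [hφd]
    linear_combination (D₁ * D₂ * D₄ * D₅ : ℚ[X]) * huv
  · apply ne_of; rw [hA]; exact mul_ne_zero (C_ne_zero.mpr q12) ha
  · apply ne_of; rw [hB]; exact mul_ne_zero (C_ne_zero.mpr q12) hb
  · apply ne_of; rw [Polynomial.map_sub, hA, hB, ← mul_sub]
    exact mul_ne_zero (C_ne_zero.mpr q12) hab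
  · apply ne_of; rw [hh₁]; exact mul_ne_zero (C_ne_zero.mpr q3) hh
  · refine ⟨w₁ * C (D₃ ^ K), ?_⟩
    apply hmapinj
    rw [Polynomial.map_mul φ (p := C _), Polynomial.map_pow, Polynomial.map_mul φ (p := g), hh₁,
      Polynomial.map_mul φ (q := w₁ * _), Polynomial.map_mul φ (q := _ - _), Polynomial.map_sub,
      Polynomial.map_mul φ (p := C D₂ * a₁), hA, hB, Polynomial.map_mul φ (p := w₁), hw₁]
    have : (map φ g * (C (D₃ : ℚ) * h)) ^ K = C (D₃ : ℚ) ^ K * (a * b * (a - b) * w) := by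
      rw [← hw]; ring
    rw [this]
    simp [hφd]
    ring
  · have e1 : (C D₂ * a₁).natDegree = a.natDegree := by
      rw [← natDegree_map_eq_of_injective hφ, hA, natDegree_C_mul q12]
    have e2 : h₁.natDegree = h.natDegree := by
      rw [← natDegree_map_eq_of_injective hφ, hh₁, natDegree_C_mul q3]
    rw [e1, e2, ← hdeg, natDegree_map_eq_of_injective hφ]

lemma abc_int (abc : ABCConjecture) (ε : ℝ) (hε : 0 < ε) :
    ∃ K : ℝ, 0 ≤ K ∧ ∀ x y : ℤ, x ≠ 0 → y ≠ 0 → x - y ≠ 0 → IsCoprime x y →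
      ((x.natAbs : ℕ) : ℝ) ≤
        K * ((∏ p ∈ (x * y * (x - y)).natAbs.primeFactors, p : ℕ) : ℝ) ^ (1 + ε) := by
  obtain ⟨K, hK⟩ := abc ε hε
  refine ⟨max K 0, le_max_right _ _, ?_⟩
  intro x y hx hy hz hxy
  have main : ∀ a b c : ℕ, 0 < a → 0 < b → 0 < c → Nat.Coprime a b → a + b = c →
      a * b * c = (x * y * (x - y)).natAbs → x.natAbs ≤ c → ((x.natAbs : ℕ) : ℝ) ≤
        max K 0 * ((∏ p ∈ (x * y * (x - y)).natAbs.primeFactors, p : ℕ) : ℝ) ^ (1 + ε) := by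
    intro a b c ha hb hc hab habc hprod hle
    have h1 := hK a b c ha hb hc hab habc
    rw [hprod] at h1
    have h2 : ((x.natAbs : ℕ) : ℝ) ≤ c := by exact_mod_cast hle
    refine h2.trans (h1.trans ?_)
    exact mul_le_mul_of_nonneg_right (le_max_left _ _) (by positivity)
  have hx' := Int.natAbs_pos.mpr hx
  have hy' := Int.natAbs_pos.mpr hy
  have hz' := Int.natAbs_pos.mpr hz
  have c1 : Nat.Coprime x.natAbs y.natAbs := Int.isCoprime_iff_nat_coprime.mp hxy
  have hxz : IsCoprime x (x - y) := by
    obtain ⟨u, v, h⟩ := hxy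
    exact ⟨u + v, -v, by linear_combination h⟩
  have hyz : IsCoprime y (x - y) := by
    obtain ⟨u, v, h⟩ := hxy
    exact ⟨u + v, u, by linear_combination h⟩
  have c2 : Nat.Coprime x.natAbs (x - y).natAbs := Int.isCoprime_iff_nat_coprime.mp hxz
  have c3 : Nat.Coprime y.natAbs (x - y).natAbs := Int.isCoprime_iff_nat_coprime.mp hyz
  have hcase : y.natAbs + (x - y).natAbs = x.natAbs ∨ x.natAbs + y.natAbs = (x - y).natAbs ∨
      x.natAbs + (x - y).natAbs = y.natAbs := by omega
  rcases hcase with h | h | h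
  · exact main _ _ _ hy' hz' hx' c3 h (by rw [Int.natAbs_mul, Int.natAbs_mul]; ring) le_rfl
  · exact main _ _ _ hx' hy' hz' c1 h (by rw [Int.natAbs_mul, Int.natAbs_mul]) (by omega)
  · exact main _ _ _ hx' hz' hy' c2 h (by rw [Int.natAbs_mul, Int.natAbs_mul]; ring) (by omega)

lemma rad_sq_le (n : ℕ) (hn : n ≠ 0) (h : ∀ p : ℕ, p.Prime → p ∣ n → p ^ 2 ∣ n) :
    (∏ p ∈ n.primeFactors, p) ^ 2 ≤ n := by
  refine Nat.le_of_dvd (Nat.pos_of_ne_zero hn) ?_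
  rw [← Finset.prod_pow]
  refine Finset.prod_dvd_of_isRelPrime ?_ ?_
  · intro p hp q hq hpq
    have hp' := Nat.prime_of_mem_primeFactors hp
    have hq' := Nat.prime_of_mem_primeFactors hq
    exact Nat.coprime_iff_isRelPrime.mp
      (Nat.Coprime.pow 2 2 ((Nat.coprime_primes hp' hq').mpr hpq))
  · intro p hp
    exact h p (Nat.prime_of_mem_primeFactors hp) (Nat.dvd_of_mem_primeFactors hp)

lemma rad_le (n e g h K : ℕ) (he : e ≠ 0) (hg : g ≠ 0) (hh : h ≠ 0)
    (hd : n ∣ e * (g * h) ^ K) :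
    (∏ p ∈ n.primeFactors, p) ≤ e * ((∏ p ∈ g.primeFactors, p) * h) := by
  have hr : (∏ p ∈ g.primeFactors, p) ≠ 0 :=
    Finset.prod_ne_zero_iff.mpr fun p hp => (Nat.prime_of_mem_primeFactors hp).ne_zero
  refine Nat.le_of_dvd (by positivity) ?_
  refine Finset.prod_primes_dvd _ (fun p hp => (Nat.prime_of_mem_primeFactors hp).prime) ?_
  intro p hp
  have pp := Nat.prime_of_mem_primeFactors hp
  have h1 := (Nat.dvd_of_mem_primeFactors hp).trans hd
  rcases (pp.dvd_mul).mp h1 with h2 | h2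
  · exact h2.mul_right _
  · rcases (pp.dvd_mul).mp (pp.dvd_of_dvd_pow h2) with h3 | h3
    · exact ((Finset.dvd_prod_of_mem (fun p => p)
        (Nat.mem_primeFactors.mpr ⟨pp, h3, hg⟩)).mul_right h).mul_left e
    · exact (h3.mul_left _).mul_left _

lemma growth (p q : ℤ[X]) (h : q.natDegree < p.natDegree) (K : ℝ) (hK : 0 ≤ K) :
    {m : ℤ | |((p.eval m : ℤ) : ℝ)| ≤ K * |((q.eval m : ℤ) : ℝ)|}.Finite := by
  set φ := Int.castRingHom ℝ with hφ
  have hinj : Function.Injective φ := Int.cast_injective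
  have hd : (q.map φ).degree < (p.map φ).degree := by
    rw [degree_map_eq_of_injective hinj, degree_map_eq_of_injective hinj]
    exact degree_lt_degree h
  have hp : p ≠ 0 := by rintro rfl; simp at h
  have hp' : p.map φ ≠ 0 := (Polynomial.map_ne_zero_iff hinj).mpr hp
  have hev : ∀ (r : ℤ[X]) (m : ℤ), (r.map φ).eval (m : ℝ) = ((r.eval m : ℤ) : ℝ) := by
    intro r m
    have := eval_intCast_map φ r m
    simpa using this
  have hc : 0 < (K + 1)⁻¹ := by positivity
  have key : ∀ x : ℝ, ‖(q.map φ).eval x‖ ≤ (K + 1)⁻¹ * ‖(p.map φ).eval x‖ →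
      ¬ (p.map φ).IsRoot x → ¬ (|(p.map φ).eval x| ≤ K * |(q.map φ).eval x|) := by
    intro x h1 h2 h3
    rw [Real.norm_eq_abs, Real.norm_eq_abs] at h1
    have h4 : 0 < |(p.map φ).eval x| := abs_pos.mpr h2
    have h5 : (K + 1) * |(q.map φ).eval x| ≤ |(p.map φ).eval x| := by
      have := mul_le_mul_of_nonneg_left h1 (by positivity : 0 ≤ K + 1)
      rwa [← mul_assoc, mul_inv_cancel₀ (by positivity), one_mul] at this
    have h6 : |(q.map φ).eval x| = 0 := le_antisymm (by linarith) (abs_nonneg _)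
    rw [h6] at h3; linarith
  have top := ((isLittleO_atTop_of_degree_lt _ _ hd).def hc).and (eventually_atTop_not_isRoot _ hp')
  have bot := ((isLittleO_atBot_of_degree_lt _ _ hd).def hc).and (eventually_atBot_not_isRoot _ hp')
  obtain ⟨T, hT⟩ := Filter.eventually_atTop.mp top
  obtain ⟨S, hS⟩ := Filter.eventually_atBot.mp bot
  refine (Set.finite_Icc ⌊S⌋ ⌈T⌉).subset ?_
  intro m hm
  rw [Set.mem_ofPred_eq, ← hev, ← hev] at hm
  constructor
  · by_contra hlt
    have : (m : ℝ) ≤ S := (Int.cast_le.mpr (not_le.mp hlt).le).trans (Int.floor_le S)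
    exact key m (hS m this).1 (hS m this).2 hm
  · by_contra hlt
    have : T ≤ (m : ℝ) := (Int.le_ceil T).trans (Int.cast_le.mpr (not_le.mp hlt).le)
    exact key m (hT m this).1 (hT m this).2 hm

lemma finite_roots_int (p : ℤ[X]) (hp : p ≠ 0) : {m : ℤ | p.eval m = 0}.Finite := by
  refine (p.roots.toFinset.finite_toSet).subset ?_
  intro m hm
  simpa [hp] using hm

theorem stmt19 (abc : ABCConjecture)
    (g : Polynomial ℤ) (hdeg : 2 < g.natDegree)
    (hsep : (g.map (Int.castRingHom ℂ)).Separable) :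
    {m : ℤ | ∀ p : ℕ, p.Prime → (p : ℤ) ∣ g.eval m → (p : ℤ) ^ 2 ∣ g.eval m}.Finite := by
  have hsq : Squarefree (g.map (Int.castRingHom ℚ)) := by
    apply Separable.squarefree
    rw [← separable_map (algebraMap ℚ ℂ), Polynomial.map_map]
    have e : (algebraMap ℚ ℂ).comp (Int.castRingHom ℚ) = Int.castRingHom ℂ := RingHom.ext_int _ _
    rw [e]
    exact hsep
  have hg0 : g ≠ 0 := by rintro rfl; simp at hdeg
  obtain ⟨a, b, h, K, G, E, u, v, hG, hE, huv, ha, hb, hab, hh, hdvd, hd⟩ := belyi_int g hsq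
  set M : ℕ := (g * h ^ 2).natDegree + 1 with hM
  have hMpos : (0 : ℝ) < M := by positivity
  obtain ⟨κ, hκ, hκabc⟩ := abc_int abc (1 / M) (by positivity)
  have hdH : (g * h ^ 2).natDegree = g.natDegree + 2 * h.natDegree := by
    rw [natDegree_mul hg0 (pow_ne_zero _ hh), natDegree_pow]
  have hfin := growth (a ^ (2 * M)) ((g * h ^ 2) ^ (M + 1)) (by
    rw [natDegree_pow, natDegree_pow]
    have e : (g * h ^ 2).natDegree + 1 ≤ 2 * a.natDegree := by omega
    nlinarith) ((|(G : ℝ)| * κ) ^ (2 * M) * (E ^ 2 : ℝ) ^ (M + 1)) (by positivity)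
  refine (((((finite_roots_int g hg0).union (finite_roots_int a ha)).union
    (finite_roots_int b hb)).union (finite_roots_int (a - b) hab)).union
    ((finite_roots_int h hh).union hfin)).subset ?_
  intro m hm
  by_contra hnot
  simp only [Set.mem_union, Set.mem_ofPred_eq, not_or] at hnot
  obtain ⟨⟨⟨⟨hgm, ham⟩, hbm⟩, habm⟩, hhm, hgr⟩ := hnot
  apply hgr
  rw [eval_sub] at habm
  have hbez : u.eval m * a.eval m + v.eval m * b.eval m = G := by
    have := congrArg (eval m) huv
    simpa using this
  have hdv : a.eval m * b.eval m * (a.eval m - b.eval m) ∣ E * (g.eval m * h.eval m) ^ K := by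
    have := map_dvd (evalRingHom m) hdvd
    simpa using this
  generalize hgv : g.eval m = gm at *
  generalize hav : a.eval m = am at *
  generalize hbv : b.eval m = bm at *
  generalize hhv : h.eval m = hm' at *
  obtain ⟨x, y, d, hd0, hxy, rfl, rfl⟩ : ∃ x y d : ℤ, d ≠ 0 ∧ IsCoprime x y ∧ am = d * x ∧
      bm = d * y := by
    have hgcd : Int.gcd am bm ≠ 0 := by
      rw [Ne, Int.gcd_eq_zero_iff]; tauto
    refine ⟨am / Int.gcd am bm, bm / Int.gcd am bm, Int.gcd am bm, by exact_mod_cast hgcd,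
      ?_, ?_, ?_⟩
    · rw [Int.isCoprime_iff_gcd_eq_one]
      exact Int.gcd_ediv_gcd_ediv_gcd (Nat.pos_of_ne_zero hgcd)
    · exact (Int.mul_ediv_cancel' (Int.gcd_dvd_left ..)).symm
    · exact (Int.mul_ediv_cancel' (Int.gcd_dvd_right ..)).symm
  have hdG : d ∣ G := ⟨u.eval m * x + v.eval m * y, by rw [← hbez]; ring⟩
  have hdle : |(d : ℝ)| ≤ |(G : ℝ)| := by
    have := Int.le_of_dvd (abs_pos.mpr hG) ((abs_dvd_abs d G).mpr hdG)
    exact_mod_cast this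
  have hx0 : x ≠ 0 := by rintro rfl; simp at ham
  have hy0 : y ≠ 0 := by rintro rfl; simp at hbm
  have hz0 : x - y ≠ 0 := by
    intro hz; apply habm; rw [← mul_sub, hz, mul_zero]
  have hA := hκabc x y hx0 hy0 hz0 hxy
  have hdv2 : (x * y * (x - y)).natAbs ∣ E.natAbs * (gm.natAbs * hm'.natAbs) ^ K := by
    rw [← Int.natAbs_mul, ← Int.natAbs_pow, ← Int.natAbs_mul, Int.natAbs_dvd_natAbs]
    refine Dvd.dvd.trans ⟨d ^ 3, ?_⟩ hdv
    ring
  have hrad := rad_le _ _ _ _ _ (Int.natAbs_ne_zero.mpr hE) (Int.natAbs_ne_zero.mpr hgm)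
    (Int.natAbs_ne_zero.mpr hhm) hdv2
  have hpow := rad_sq_le gm.natAbs (Int.natAbs_ne_zero.mpr hgm) (by
    intro p pp hpd
    have h1 := hm p pp (by rw [hgv]; exact Int.natCast_dvd.mpr hpd)
    rw [hgv] at h1
    have h2 : ((p ^ 2 : ℕ) : ℤ) ∣ gm := by exact_mod_cast h1
    exact Int.natCast_dvd.mp h2)
  generalize (∏ p ∈ gm.natAbs.primeFactors, p) = rg at *
  generalize (∏ p ∈ (x * y * (x - y)).natAbs.primeFactors, p) = r at *
  have hr2 : r ^ 2 ≤ E.natAbs ^ 2 * (gm.natAbs * hm'.natAbs ^ 2) := by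
    calc r ^ 2 ≤ (E.natAbs * (rg * hm'.natAbs)) ^ 2 := Nat.pow_le_pow_left hrad 2
      _ = E.natAbs ^ 2 * (rg ^ 2 * hm'.natAbs ^ 2) := by ring
      _ ≤ _ := by gcongr
  have hr2' : (r : ℝ) ^ 2 ≤ (E : ℝ) ^ 2 * |(gm : ℝ) * (hm' : ℝ) ^ 2| := by
    have : ((r ^ 2 : ℕ) : ℝ) ≤ ((E.natAbs ^ 2 * (gm.natAbs * hm'.natAbs ^ 2) : ℕ) : ℝ) := by
      exact_mod_cast hr2
    push_cast [Nat.cast_natAbs] at this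
    simpa [abs_mul] using this
  have hrp : ((r : ℝ) ^ (1 + 1 / (M : ℝ))) ^ (2 * M) = ((r : ℝ) ^ 2) ^ (M + 1) := by
    rw [← Real.rpow_natCast, ← Real.rpow_mul (Nat.cast_nonneg r), ← pow_mul, ← Real.rpow_natCast]
    congr 1
    push_cast
    field_simp
  have hA' : |(x : ℝ)| ≤ κ * (r : ℝ) ^ (1 + 1 / (M : ℝ)) := by
    simpa [Nat.cast_natAbs] using hA
  simp only [eval_pow, eval_mul, hav, hgv, hhv]
  push_cast
  rw [abs_pow, abs_pow, abs_mul]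
  calc (|(d : ℝ)| * |(x : ℝ)|) ^ (2 * M)
      ≤ (|(G : ℝ)| * (κ * (r : ℝ) ^ (1 + 1 / (M : ℝ)))) ^ (2 * M) := by gcongr
    _ = (|(G : ℝ)| * κ) ^ (2 * M) * ((r : ℝ) ^ 2) ^ (M + 1) := by
        rw [← hrp, ← mul_assoc, mul_pow]
    _ ≤ (|(G : ℝ)| * κ) ^ (2 * M) * ((E : ℝ) ^ 2 * |(gm : ℝ) * (hm' : ℝ) ^ 2|) ^ (M + 1) := by
        gcongr
    _ = _ := by rw [mul_pow (M := ℝ) ((E : ℝ) ^ 2)]; ring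
end
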